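/- For every N ≥ 1, the field extension ℚ(j, {j∘g}_{g∈G_N}) of ℚ(j) is Galois with Galois group Gal(ℚ(j, {j∘g}_{g∈G_N}) / ℚ(j)) ≅ PGL₂(ℤ/Nℤ), and Gal(ℚ^cyc(j, {j∘g}_{g∈G_N}) / ℚ^cyc(j)) ≅ PSL₂(ℤ/Nℤ), where ℚ^cyc is the field generated by all roots of unity. -/

import Mathlib

set_option synthInstance.maxHeartbeats 800000
set_option maxHeartbeats 1600000
noncomputable section
open UpperHalfPlane Matrix MatrixGroups Classical

namespace JPaper

/-! ### The group `G = GL₂⁺(ℚ)` modulo scalars and its action on `ℍ` -/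

/-- `GL₂⁺(ℚ)`, the group of 2×2 rational matrices with positive determinant. -/
abbrev GL2QPos : Type := Matrix.GLPos (Fin 2) ℚ

lemma map_mem_glpos (g : GL2QPos) :
    (Matrix.GeneralLinearGroup.map (algebraMap ℚ ℝ) : GL (Fin 2) ℚ →* GL (Fin 2) ℝ) g ∈
      Matrix.GLPos (Fin 2) ℝ := by
  have hg := g.2
  rw [Matrix.mem_glpos] at hg ⊢
  rw [Matrix.GeneralLinearGroup.val_det_apply] at hg ⊢
  show (0:ℝ) < Matrix.det _
  have : ((Matrix.GeneralLinearGroup.map (algebraMap ℚ ℝ) (g : GL (Fin 2) ℚ) :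
      GL (Fin 2) ℝ) : Matrix (Fin 2) (Fin 2) ℝ) = ((g : GL (Fin 2) ℚ) :
      Matrix (Fin 2) (Fin 2) ℚ).map (algebraMap ℚ ℝ) := rfl
  rw [this, ← RingHom.mapMatrix_apply, ← RingHom.map_det]
  simpa using (Rat.cast_pos (K := ℝ)).mpr hg

/-- The homomorphism `GL₂⁺(ℚ) →* GL₂⁺(ℝ)` induced by `ℚ ⊆ ℝ`. -/
def toGLPosR : GL2QPos →* Matrix.GLPos (Fin 2) ℝ :=
  MonoidHom.codRestrict
    ((Matrix.GeneralLinearGroup.map (algebraMap ℚ ℝ)).comp (Matrix.GLPos (Fin 2) ℚ).subtype)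
    (Matrix.GLPos (Fin 2) ℝ) (fun g => map_mem_glpos g)

/-- `G := GL₂⁺(ℚ)ᵃᵈ`, i.e. `GL₂⁺(ℚ)` modulo its centre (the scalar matrices). -/
abbrev GQ : Type := GL2QPos ⧸ Subgroup.center GL2QPos

/-- The action of an element of `G = GL₂⁺(ℚ)` modulo scalars on the upper half plane,
via a choice of representative (the centre acts trivially on `ℍ`, so this recovers the
natural action by Möbius transformations). -/
def gqSmul (g : GQ) (τ : ℍ) : ℍ := toGLPosR g.out • τ

/-- The image of `SL₂(ℤ)` in `GL₂⁺(ℚ)`. -/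
def sl2ZtoGLQ (γ : Matrix.SpecialLinearGroup (Fin 2) ℤ) : GL2QPos :=
  ⟨Matrix.SpecialLinearGroup.toGL
      (Matrix.SpecialLinearGroup.map (Int.castRingHom ℚ) γ), by
    rw [Matrix.mem_glpos, Matrix.GeneralLinearGroup.val_det_apply]
    show (0:ℚ) < Matrix.det _
    have : ((Matrix.SpecialLinearGroup.toGL
        (Matrix.SpecialLinearGroup.map (Int.castRingHom ℚ) γ) : GL (Fin 2) ℚ) :
        Matrix (Fin 2) (Fin 2) ℚ).det = 1 :=
      (Matrix.SpecialLinearGroup.map (Int.castRingHom ℚ) γ).2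
    rw [this]; norm_num⟩

/-- The image of `SL₂(ℤ)` in `G = GL₂⁺(ℚ)` modulo scalars. -/
def sl2ZtoGQ (γ : Matrix.SpecialLinearGroup (Fin 2) ℤ) : GQ :=
  QuotientGroup.mk (sl2ZtoGLQ γ)

/-! ### The modular `j`-function and special points -/

/-- The classical modular `j`-function on the upper half plane, defined via the
Eisenstein series `g₂, g₃` of the lattice `ℤτ + ℤ`. -/
def jFunction (τ : ℍ) : ℂ :=
  let g2 : ℂ := 60 * ∑' p : ℤ × ℤ,
    if p = 0 then 0 else (((p.1 : ℂ) * (τ : ℂ) + (p.2 : ℂ)) ^ 4)⁻¹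
  let g3 : ℂ := 140 * ∑' p : ℤ × ℤ,
    if p = 0 then 0 else (((p.1 : ℂ) * (τ : ℂ) + (p.2 : ℂ)) ^ 6)⁻¹
  1728 * g2 ^ 3 / (g2 ^ 3 - 27 * g3 ^ 2)

/-- A point of `ℍ` is special (a CM point) if it is fixed by some nontrivial element
of `G = GL₂⁺(ℚ)` modulo scalars. -/
def IsSpecial (τ : ℍ) : Prop := ∃ g : GQ, g ≠ 1 ∧ gqSmul g τ = τ

/-- The set of special points of `ℍ`. -/
def SpecialSet : Set ℍ := {τ | IsSpecial τ}

/-- The set `j(S) ⊆ ℂ` of singular moduli, i.e. `j`-values of special points. -/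
def jSpecialValues : Set ℂ := jFunction '' SpecialSet

/-- The subfield `ℚ(j(S))` of `ℂ` generated by the singular moduli. -/
def QjS : Subfield ℂ := Subfield.closure jSpecialValues

/-- An integral matrix is primitive if the gcd of its entries is 1. -/
def IsPrimitiveIntMatrix (A : Matrix (Fin 2) (Fin 2) ℤ) : Prop :=
  Int.gcd (Int.gcd (A 0 0) (A 0 1)) (Int.gcd (A 1 0) (A 1 1)) = 1

/-- `G_N`: the set of elements of `G` which, after multiplying through by an integer to
clear denominators in all entries, have determinant `N`. -/
def GQdet (N : ℕ) : Set GQ :=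
  {g | ∃ A : Matrix (Fin 2) (Fin 2) ℤ, IsPrimitiveIntMatrix A ∧ A.det = (N : ℤ) ∧
    ∃ c : ℚ, ((g.out : GL (Fin 2) ℚ) : Matrix (Fin 2) (Fin 2) ℚ) =
      c • A.map (fun x => (x : ℚ))}

/-- The `N`-th classical modular polynomial `Φ_N ∈ ℤ[X,Y]`, characterised by the property
that `Φ_N(z,w) = 0` iff `z` and `w` are the `j`-invariants of elliptic curves related by a
cyclic `N`-isogeny, i.e. iff `w = j(gτ)`, `z = j(τ)` for some `τ ∈ ℍ` and `g ∈ G_N`. -/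
def modularPoly (N : ℕ) : MvPolynomial (Fin 2) ℤ :=
  if h : ∃ P : MvPolynomial (Fin 2) ℤ, P ≠ 0 ∧ ∀ z w : ℂ,
      (MvPolynomial.aeval ![z, w]) P = 0 ↔
        ∃ (τ : ℍ) (g : GQ), g ∈ GQdet N ∧ jFunction τ = z ∧ jFunction (gqSmul g τ) = w
  then h.choose else 0


/-- The modular polynomial `Φ_N(X, t) ∈ F(t)[X]` over the rational function field `F(t)`,
where `t` plays the role of the modular function `j` (so that `F(t) ≅ F(j)` is the function
field of the modular curve `Y₀'(1)`, and the splitting field of `Φ_N(X, j)` over `F(j)` is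
the normal closure `F(j, {j∘g}_{g ∈ G_N})`). -/
def modularPolyOneVar (F : Type) [Field F] (N : ℕ) : Polynomial (RatFunc F) :=
  MvPolynomial.aeval ![Polynomial.X, Polynomial.C RatFunc.X] (modularPoly N)

/-- The set of all roots of unity in `ℂ`. -/
def rootsOfUnitySet : Set ℂ := {z | ∃ n : ℕ, 0 < n ∧ z ^ n = 1}

/-- `ℚ^cyc`, the subfield of `ℂ` generated by all roots of unity. -/
def Qcyc : Subfield ℂ := Subfield.closure rootsOfUnitySet

/-- `PGL₂(ℤ/Nℤ)`. -/
abbrev PGL2ZmodN (N : ℕ) : Type :=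
  GL (Fin 2) (ZMod N) ⧸ Subgroup.center (GL (Fin 2) (ZMod N))

/-- `PSL₂(ℤ/Nℤ)`. -/
abbrev PSL2ZmodN (N : ℕ) : Type :=
  Matrix.SpecialLinearGroup (Fin 2) (ZMod N) ⧸
    Subgroup.center (Matrix.SpecialLinearGroup (Fin 2) (ZMod N))

end JPaper

set_option autoImplicit false

namespace JPaper
open ModularForm EisensteinSeries
open scoped Manifold

/-! ### The `j`-function as a quotient of modular forms -/

lemma tsum_lattice_eq {k : ℕ} (hk : 3 ≤ k) (τ : ℍ) :
    ∑' p : ℤ × ℤ, (if p = 0 then 0 else (((p.1 : ℂ) * (τ : ℂ) + (p.2 : ℂ)) ^ k)⁻¹) =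
      2 * riemannZeta k * E hk τ := by
  have h := tsum_eisSummand_eq_riemannZeta_mul_eisensteinSeries hk τ
  have hE : E hk τ = (1 / 2 : ℂ) * eisensteinSeries (N := 1) 0 k τ := rfl
  rw [hE]
  calc _ = ∑' v : Fin 2 → ℤ, eisSummand k v τ := by
        rw [← (finTwoArrowEquiv ℤ).symm.tsum_eq]
        refine tsum_congr fun p ↦ ?_
        split_ifs with hp
        · simp [hp, eisSummand, show k ≠ 0 by omega]
        · simp [eisSummand]
    _ = _ := by rw [h]; ring

lemma riemannZeta_six : riemannZeta 6 = (Real.pi : ℂ) ^ 6 / 945 := by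
  have h := riemannZeta_two_mul_nat (k := 3) (by norm_num)
  have hb : bernoulli 6 = 1 / 42 := by decide +kernel
  norm_num [hb, Nat.factorial] at h
  rw [h]
  ring

theorem jFunction_eq (τ : ℍ) : jFunction τ = E₄ τ ^ 3 / discriminant τ := by
  have h4 := tsum_lattice_eq (k := 4) (by norm_num) τ
  have h6 := tsum_lattice_eq (k := 6) (by norm_num) τ
  simp only [Nat.cast_ofNat] at h4 h6
  have hd := discriminant_eq_E₄_cube_sub_E₆_sq τ
  have hd0 := discriminant_ne_zero τ
  have hsub : E₄ τ ^ 3 - E₆ τ ^ 2 = 1728 * discriminant τ := by rw [hd]; ring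
  have hpi : (Real.pi : ℂ) ≠ 0 := by exact_mod_cast Real.pi_ne_zero
  unfold jFunction
  simp only [h4, h6, riemannZeta_four, riemannZeta_six]
  change 1728 * (60 * (2 * _ * E₄ τ)) ^ 3 /
    ((60 * (2 * _ * E₄ τ)) ^ 3 - 27 * (140 * (2 * _ * E₆ τ)) ^ 2) = _
  have : (60 * (2 * ((Real.pi : ℂ) ^ 4 / 90) * E₄ τ)) ^ 3 -
      27 * (140 * (2 * ((Real.pi : ℂ) ^ 6 / 945) * E₆ τ)) ^ 2 =
      64 / 27 * (Real.pi : ℂ) ^ 12 * (1728 * discriminant τ) := by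
    rw [← hsub]; ring
  rw [this]
  field_simp
  ring

theorem jFunction_smul (γ : SL(2, ℤ)) (τ : ℍ) : jFunction (γ • τ) = jFunction τ := by
  have h4 : E₄ (γ • τ) = _ :=
    (slash_action_eq'_iff 4 E₄ γ τ).1 (congr_fun (E₄.slash_action_eq' _ ⟨γ, rfl⟩) τ)
  have hΔ : discriminant (γ • τ) = _ :=
    (slash_action_eq'_iff 12 discriminant γ τ).1
      (congr_fun (CuspForm.discriminant.slash_action_eq' _ ⟨γ, rfl⟩) τ)
  have hden : ((γ 1 0 : ℂ) * τ + γ 1 1) ≠ 0 := by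
    simpa [denom] using denom_ne_zero γ τ
  have hd0 := discriminant_ne_zero τ
  rw [jFunction_eq, jFunction_eq, h4, hΔ]
  generalize (γ 1 0 : ℂ) * τ + γ 1 1 = w at hden
  generalize discriminant τ = d at hd0
  generalize E₄ τ = e
  rw [zpow_ofNat, zpow_ofNat]
  field_simp

lemma mdiff_E₄ : MDiff (E₄ : ℍ → ℂ) := E₄.holo'

lemma mdiff_discriminant : MDiff (discriminant : ℍ → ℂ) := CuspForm.discriminant.holo'

lemma mdiff_div {f g : ℍ → ℂ} (hf : MDiff f) (hg : MDiff g) (h0 : ∀ τ, g τ ≠ 0) :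
    MDiff (fun τ ↦ f τ / g τ) := by
  rw [UpperHalfPlane.mdifferentiable_iff] at *
  exact hf.div hg fun z hz ↦ h0 _

theorem mdiff_jFunction : MDiff jFunction := by
  have : jFunction = fun τ ↦ (E₄ τ ^ 3) / discriminant τ := funext jFunction_eq
  rw [this]
  exact mdiff_div (mdiff_E₄.pow 3) mdiff_discriminant discriminant_ne_zero

/-- A holomorphic `SL₂(ℤ)`-invariant function bounded at `i∞` is constant. -/
theorem eq_const_of_invariant {f : ℍ → ℂ} (hf : MDiff f)
    (hinv : ∀ (γ : SL(2, ℤ)) τ, f (γ • τ) = f τ) (hb : IsBoundedAtImInfty f) :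
    ∃ c, ∀ τ, f τ = c := by
  have hslash (γ : SL(2, ℤ)) : f ∣[(0 : ℤ)] γ = f := by
    ext τ
    rw [slash_action_eq'_iff, hinv]
    simp
  let F : ModularForm 𝒮ℒ 0 :=
    { toFun := f
      slash_action_eq' := by
        rintro _ ⟨γ, rfl⟩
        exact hslash γ
      holo' := hf
      bdd_at_cusps' := fun {c} hc ↦ by
        rw [Subgroup.IsArithmetic.isCusp_iff_isCusp_SL2Z] at hc
        rw [OnePoint.isBoundedAt_iff_forall_SL2Z hc]
        intro γ _
        rw [hslash]
        exact hb }
  obtain ⟨c, hc⟩ := ModularFormClass.levelOne_weight_zero_const F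
  exact ⟨c, fun τ ↦ congr_fun hc τ⟩

end JPaper

namespace JPaper
open ModularForm EisensteinSeries
open scoped Manifold
open Function.Periodic (qParam)
open Filter Topology

/-! ### The expansion of `j` at the cusp -/

lemma periodic_comp_ofComplex {f : ℍ → ℂ} (hf : ∀ τ : ℍ, f ((1 : ℝ) +ᵥ τ) = f τ) :
    Function.Periodic (f ∘ ofComplex) (1 : ℝ) := by
  intro w
  by_cases! hw : 0 < w.im
  · have : 0 < (w + (1 : ℝ)).im := by simp [hw]
    simp only [Function.comp_apply, ofComplex_apply_of_im_pos this, ofComplex_apply_of_im_pos hw]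
    convert! hf ⟨w, hw⟩ using 2
    ext
    simp [add_comm]
  · have : (w + (1 : ℝ)).im ≤ 0 := by simpa using hw
    simp only [Function.comp_apply, ofComplex_apply_of_im_nonpos this,
      ofComplex_apply_of_im_nonpos hw]

lemma hasSum_qParam_unique {h : ℝ} (hh : 0 < h) {f : ℍ → ℂ} {c d : ℕ → ℂ}
    (hc : ∀ τ : ℍ, HasSum (fun m ↦ c m * qParam h τ ^ m) (f τ))
    (hd : ∀ τ : ℍ, HasSum (fun m ↦ d m * qParam h τ ^ m) (f τ)) : c = d := by
  have hz : cuspFunction h (0 : ℍ → ℂ) = 0 := by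
    have : (0 : ℍ → ℂ) = (0 : ℂ) • (0 : ℍ → ℂ) := by simp
    funext w
    by_cases hw : w = 0
    · subst hw
      simp only [cuspFunction, Function.Periodic.cuspFunction, Function.update_self, Pi.zero_apply]
      refine Filter.Tendsto.limUnder_eq ?_
      refine tendsto_const_nhds.congr' ?_
      filter_upwards [self_mem_nhdsWithin] with a ha
      simp [Function.comp_def]
    · simp only [cuspFunction, Function.Periodic.cuspFunction, Function.update_of_ne hw,
        Pi.zero_apply, Function.comp_apply]
  have h0 : ∀ τ : ℍ, HasSum (fun m ↦ (c m - d m) • qParam h τ ^ m) ((0 : ℍ → ℂ) τ) := fun τ ↦ by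
    simpa [sub_mul] using (hc τ).sub (hd τ)
  have h1 := (hasFPowerSeriesOnBall_cuspFunction hh (by rw [hz]; exact analyticAt_const) h0)
  rw [hz] at h1
  have h2 := h1.hasFPowerSeriesAt.eq_zero
  funext m
  have h3 := congr_arg (FormalMultilinearSeries.coeff · m) h2
  have h4 : (0 : FormalMultilinearSeries ℂ ℂ ℂ).coeff m = 0 := rfl
  simp only [h4] at h3
  exact sub_eq_zero.1 (by simpa using h3)

lemma qParam_one_vadd (τ : ℍ) : qParam 1 ((1 : ℝ) +ᵥ τ : ℍ) = qParam 1 τ := by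
  simp only [qParam, coe_vadd, Complex.ofReal_one, div_one, mul_add, mul_one, Complex.exp_add,
    Complex.exp_two_pi_mul_I, one_mul]

lemma mdiff_qParam (h : ℝ) : MDiff (fun τ : ℍ ↦ qParam h τ) := by
  rw [UpperHalfPlane.mdifferentiable_iff]
  refine DifferentiableOn.congr (f := qParam h)
    (Function.Periodic.differentiable_qParam).differentiableOn fun z hz ↦ ?_
  simp [ofComplex_apply_of_im_pos hz]

lemma isBoundedAtImInfty_qParam : IsBoundedAtImInfty (fun τ : ℍ ↦ qParam 1 τ) :=
  (qParam_tendsto_atImInfty one_pos).isBigO_one ℝ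

lemma jFunction_vadd (τ : ℍ) : jFunction ((1 : ℝ) +ᵥ τ) = jFunction τ := by
  rw [← modular_T_smul, jFunction_smul]

lemma isBoundedAtImInfty_qParam_mul_j :
    IsBoundedAtImInfty (fun τ : ℍ ↦ qParam 1 τ * jFunction τ) := by
  have h1 : (fun τ : ℍ ↦ qParam 1 τ) =O[atImInfty] discriminant := by
    refine Asymptotics.IsBigO.trans (Asymptotics.IsBigO.of_norm_le fun τ ↦ ?_)
      exp_isBigO_discriminant
    simp [Function.Periodic.norm_qParam]
  have h2 : (fun τ : ℍ ↦ E₄ τ) =O[atImInfty] (fun _ ↦ (1 : ℂ)) :=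
    Asymptotics.IsBigO.trans (ModularFormClass.bdd_at_infty E₄)
      (Asymptotics.isBigO_of_le _ fun _ ↦ by simp)
  have h3 : (fun τ : ℍ ↦ (discriminant τ)⁻¹) =O[atImInfty] (fun τ ↦ (discriminant τ)⁻¹) :=
    Asymptotics.isBigO_refl _ _
  have h4 := (h1.mul h3).mul (h2.pow 3)
  refine (h4.congr (fun τ ↦ ?_) fun τ ↦ ?_).trans (Asymptotics.isBigO_refl (1 : ℍ → ℂ) _)
    |>.trans (Asymptotics.isBigO_of_le _ (fun _ ↦ by simp))
  · rw [jFunction_eq]; ring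
  · simp [discriminant_ne_zero τ]

theorem exists_expansion_j : ∃ c : ℕ → ℚ, c 0 = 1 ∧
    (∀ τ : ℍ, HasSum (fun n ↦ (c n : ℂ) * qParam 1 τ ^ n) (qParam 1 τ * jFunction τ)) ∧
    Tendsto (fun τ : ℍ ↦ qParam 1 τ * jFunction τ) atImInfty (𝓝 1) := by
  set f : ℍ → ℂ := fun τ ↦ qParam 1 τ * jFunction τ with hf
  set qf : ℍ → ℂ := fun τ ↦ qParam 1 τ with hqf
  have fper : Function.Periodic (f ∘ ofComplex) (1 : ℝ) :=
    periodic_comp_ofComplex fun τ ↦ by simp only [hf, qParam_one_vadd, jFunction_vadd]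
  have fhol : MDiff f := (mdiff_qParam 1).mul mdiff_jFunction
  have fbdd : IsBoundedAtImInfty f := isBoundedAtImInfty_qParam_mul_j
  have qper : Function.Periodic (qf ∘ ofComplex) (1 : ℝ) :=
    periodic_comp_ofComplex fun τ ↦ qParam_one_vadd τ
  have fan := analyticAt_cuspFunction_zero one_pos fper fhol fbdd
  have qan := analyticAt_cuspFunction_zero one_pos qper (mdiff_qParam 1) isBoundedAtImInfty_qParam
  have ean : AnalyticAt ℂ (cuspFunction 1 E₄) 0 :=
    ModularFormClass.analyticAt_cuspFunction_zero E₄ one_pos one_mem_strictPeriods_SL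
  have e6an : AnalyticAt ℂ (cuspFunction 1 E₆) 0 :=
    ModularFormClass.analyticAt_cuspFunction_zero E₆ one_pos one_mem_strictPeriods_SL
  have dan : AnalyticAt ℂ (cuspFunction 1 discriminant) 0 :=
    ModularFormClass.analyticAt_cuspFunction_zero CuspForm.discriminant one_pos
      one_mem_strictPeriods_SL
  have hqX : qExpansion 1 qf = PowerSeries.X := by
    ext n
    refine congr_fun (hasSum_qParam_unique one_pos (fun τ ↦ UpperHalfPlane.hasSum_qExpansion
      one_pos qper (mdiff_qParam 1) isBoundedAtImInfty_qParam τ)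
      (d := fun n ↦ PowerSeries.coeff n (PowerSeries.X : PowerSeries ℂ)) fun τ ↦ ?_) n
    convert! hasSum_single (f := fun m ↦ PowerSeries.coeff m (PowerSeries.X : PowerSeries ℂ) *
      qParam 1 τ ^ m) 1 (fun m hm ↦ ?_) using 1
    · simp [hqf]
    · simp [PowerSeries.coeff_X, hm]
  obtain ⟨e4, he4⟩ : ∃ e4 : PowerSeries ℚ, e4.map (algebraMap ℚ ℂ) = qExpansion 1 E₄ := by
    refine ⟨.mk fun m ↦ if m = 0 then 1 else
      -(2 * 4 / bernoulli 4) * (ArithmeticFunction.sigma 3 m : ℚ), ?_⟩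
    ext m
    rw [E_qExpansion_coeff _ ⟨2, rfl⟩]
    split_ifs with h <;> simp [h]
  obtain ⟨e6, he6⟩ : ∃ e6 : PowerSeries ℚ, e6.map (algebraMap ℚ ℂ) = qExpansion 1 E₆ := by
    refine ⟨.mk fun m ↦ if m = 0 then 1 else
      -(2 * 6 / bernoulli 6) * (ArithmeticFunction.sigma 5 m : ℚ), ?_⟩
    ext m
    rw [E_qExpansion_coeff _ ⟨3, rfl⟩]
    split_ifs with h <;> simp [h]
  have qmul {f g : ℍ → ℂ} (hf : AnalyticAt ℂ (cuspFunction 1 f) 0)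
      (hg : AnalyticAt ℂ (cuspFunction 1 g) 0) :
      AnalyticAt ℂ (cuspFunction 1 (f * g)) 0 := by
    rw [UpperHalfPlane.cuspFunction_mul hf.continuousAt hg.continuousAt]
    exact hf.mul hg
  have key : discriminant * f = qf * (E₄ * (E₄ * E₄)) := by
    ext τ
    simp only [Pi.mul_apply, hf, hqf, jFunction_eq]
    field_simp [discriminant_ne_zero τ]
  have key2 : (E₄ * (E₄ * E₄) : ℍ → ℂ) = (1728 : ℂ) • discriminant + E₆ * E₆ := by
    ext τ
    simp only [Pi.mul_apply, Pi.add_apply, Pi.smul_apply, smul_eq_mul,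
      discriminant_eq_E₄_cube_sub_E₆_sq]
    ring
  have sdan : AnalyticAt ℂ (cuspFunction 1 ((1728 : ℂ) • discriminant)) 0 := by
    rw [UpperHalfPlane.cuspFunction_smul dan.continuousAt]
    exact analyticAt_const.mul dan
  have K1 : qExpansion 1 discriminant * qExpansion 1 f =
      PowerSeries.X * (e4 ^ 3).map (algebraMap ℚ ℂ) := by
    rw [← UpperHalfPlane.qExpansion_mul dan fan, key, UpperHalfPlane.qExpansion_mul qan
      (qmul ean (qmul ean ean)), UpperHalfPlane.qExpansion_mul ean (qmul ean ean),
      UpperHalfPlane.qExpansion_mul ean ean, hqX, ← he4]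
    simp only [map_pow]
    ring
  have K2 : (e4 ^ 3).map (algebraMap ℚ ℂ) =
      (1728 : ℂ) • qExpansion 1 discriminant + (e6 ^ 2).map (algebraMap ℚ ℂ) := by
    have := congr_arg (qExpansion 1) key2
    rw [UpperHalfPlane.qExpansion_mul ean (qmul ean ean), UpperHalfPlane.qExpansion_mul ean ean,
      UpperHalfPlane.qExpansion_add sdan (qmul e6an e6an), UpperHalfPlane.qExpansion_smul dan,
      UpperHalfPlane.qExpansion_mul e6an e6an, ← he4, ← he6] at this
    rw [map_pow, map_pow, pow_succ, pow_two, pow_two, mul_assoc, this]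
  have K3 : qExpansion 1 discriminant =
      ((1728 : ℚ)⁻¹ • (e4 ^ 3 - e6 ^ 2)).map (algebraMap ℚ ℂ) := by
    ext n
    have := congr_arg (PowerSeries.coeff n) K2
    simp only [PowerSeries.coeff_map, map_add, PowerSeries.coeff_smul, map_sub, smul_eq_mul,
      map_mul, map_inv₀, map_ofNat] at this ⊢
    rw [this]
    ring
  set δ : PowerSeries ℚ := (1728 : ℚ)⁻¹ • (e4 ^ 3 - e6 ^ 2)
  have c0 : PowerSeries.constantCoeff δ = 0 := by
    have h0 : (qExpansion 1 CuspForm.discriminant).coeff 0 = 0 :=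
      CuspFormClass.qExpansion_coeff_zero _ one_pos one_mem_strictPeriods_SL
    rw [CuspForm.coe_discriminant, K3] at h0
    simpa using h0
  obtain ⟨u, hu⟩ := PowerSeries.X_dvd_iff.2 c0
  have hu0 : PowerSeries.constantCoeff u = 1 := by
    have h1 := discriminant_qExpansion_coeff_one
    rw [K3, hu, PowerSeries.coeff_map, ← zero_add 1, PowerSeries.coeff_succ_X_mul,
      PowerSeries.coeff_zero_eq_constantCoeff_apply] at h1
    exact (algebraMap ℚ ℂ).injective (h1.trans (map_one _).symm)
  have he40 : PowerSeries.constantCoeff e4 = 1 := by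
    have h1 := E_qExpansion_coeff_zero (k := 4) (by norm_num) ⟨2, rfl⟩
    change (qExpansion 1 E₄).coeff 0 = 1 at h1
    rw [← he4, PowerSeries.coeff_map, PowerSeries.coeff_zero_eq_constantCoeff_apply] at h1
    exact (algebraMap ℚ ℂ).injective (h1.trans (map_one _).symm)
  have hC : qExpansion 1 f = (e4 ^ 3 * u⁻¹).map (algebraMap ℚ ℂ) := by
    have huinv : u * u⁻¹ = 1 := PowerSeries.mul_inv_cancel _ (by rw [hu0]; exact one_ne_zero)
    rw [K3, hu, map_mul, PowerSeries.map_X, mul_assoc] at K1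
    have K4 := mul_left_cancel₀ PowerSeries.X_ne_zero K1
    rw [map_mul, ← K4, mul_right_comm, ← map_mul, huinv, map_one, one_mul]
  refine ⟨fun n ↦ PowerSeries.coeff n (e4 ^ 3 * u⁻¹), ?_, fun τ ↦ ?_, ?_⟩
  · simp [he40, hu0]
  · convert! UpperHalfPlane.hasSum_qExpansion one_pos fper fhol fbdd τ using 2
    rw [hC, PowerSeries.coeff_map]
    simp
  · have h0 : cuspFunction 1 f 0 = 1 := by
      have := congr_arg (PowerSeries.coeff 0) hC
      rw [UpperHalfPlane.qExpansion_coeff, PowerSeries.coeff_map] at this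
      simpa [he40, hu0] using this
    have hcomp : (cuspFunction 1 f ∘ fun τ : ℍ ↦ qParam 1 τ) = f := by
      funext τ
      simpa using UpperHalfPlane.eq_cuspFunction τ one_ne_zero fper
    have := fan.continuousAt.tendsto.comp (qParam_tendsto_atImInfty one_pos)
    rwa [hcomp, h0] at this

theorem jFunction_surjective : Function.Surjective jFunction := by
  intro c
  by_contra! hc
  obtain ⟨-, -, -, hlim⟩ := exists_expansion_j
  have hq := qParam_tendsto_atImInfty (h := 1) one_pos
  have hne (τ : ℍ) : jFunction τ - c ≠ 0 := sub_ne_zero.2 (hc τ)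
  set f : ℍ → ℂ := fun τ ↦ 1 / (jFunction τ - c) with hf
  have hf0 : Tendsto f atImInfty (𝓝 0) := by
    have h1 : Tendsto (fun τ : ℍ ↦ qParam 1 τ / (qParam 1 τ * jFunction τ - qParam 1 τ * c))
        atImInfty (𝓝 (0 / (1 - 0 * c))) := hq.div (hlim.sub (hq.mul_const c)) (by simp)
    refine (h1.congr fun τ ↦ ?_).trans (by simp)
    have hq0 : qParam 1 (τ : ℂ) ≠ 0 := Function.Periodic.qParam_ne_zero _
    have := hne τ
    rw [hf, ← mul_sub]
    field_simp
  obtain ⟨a, ha⟩ := eq_const_of_invariant (f := f)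
    (mdiff_div mdifferentiable_const (mdiff_jFunction.sub mdifferentiable_const) hne)
    (fun γ τ ↦ by simp only [hf, jFunction_smul]) (hf0.isBigO_one ℝ)
  have hfc : f = fun _ ↦ a := funext ha
  rw [hfc] at hf0
  have ha0 : a = 0 := tendsto_nhds_unique tendsto_const_nhds hf0
  have := ha I
  rw [ha0, hf] at this
  simp [hne I] at this

end JPaper

namespace JPaper
open ModularForm EisensteinSeries
open scoped Manifold
open Function.Periodic (qParam)
open Filter Topology

/-! ### Functions on `ℍ` with a `q`-expansion over a field -/

section Expansions

variable {k : Type} [Field k] [Algebra k ℂ] {N : ℕ}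

/-- `f` is the sum of the power series `p` in `exp (2 π i τ / N)`. -/
def HasPowerExp (N : ℕ) (f : ℍ → ℂ) (p : PowerSeries k) : Prop :=
  ∀ τ : ℍ, HasSum (fun n ↦ algebraMap k ℂ (p.coeff n) * qParam N τ ^ n) (f τ)

namespace HasPowerExp

variable {f g : ℍ → ℂ} {p p' : PowerSeries k}

lemma add (h : HasPowerExp N f p) (h' : HasPowerExp N g p') : HasPowerExp N (f + g) (p + p') :=
  fun τ ↦ by simpa [add_mul] using (h τ).add (h' τ)

lemma const (N : ℕ) (a : k) :
    HasPowerExp N (fun _ ↦ algebraMap k ℂ a) (PowerSeries.C a) := fun τ ↦ by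
  convert! hasSum_single (f := fun n ↦ algebraMap k ℂ ((PowerSeries.C a).coeff n) *
    qParam N τ ^ n) 0 (fun n hn ↦ ?_) using 1
  · simp
  · simp [PowerSeries.coeff_C, hn]

lemma mul (h : HasPowerExp N f p) (h' : HasPowerExp N g p') :
    HasPowerExp N (f * g) (p * p') := fun τ ↦ by
  have h1 := (h τ).summable.norm
  have h2 := (h' τ).summable.norm
  have h3 := (summable_norm_sum_mul_antidiagonal_of_summable_norm h1 h2).of_norm.hasSum
  rw [← tsum_mul_tsum_eq_tsum_sum_antidiagonal_of_summable_norm h1 h2, (h τ).tsum_eq,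
    (h' τ).tsum_eq] at h3
  convert! h3 using 2 with n
  rw [PowerSeries.coeff_mul, map_sum, Finset.sum_mul]
  refine Finset.sum_congr rfl fun x hx ↦ ?_
  rw [map_mul, ← Finset.HasAntidiagonal.mem_antidiagonal.1 hx, pow_add]
  ring

lemma qParam_X (N : ℕ) :
    HasPowerExp N (fun τ ↦ qParam N τ) (PowerSeries.X : PowerSeries k) := fun τ ↦ by
  convert! hasSum_single (f := fun n ↦ algebraMap k ℂ ((PowerSeries.X : PowerSeries k).coeff n) *
    qParam N τ ^ n) 1 (fun n hn ↦ ?_) using 1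
  · simp
  · simp [PowerSeries.coeff_X, hn]

lemma pow (h : HasPowerExp N f p) (n : ℕ) : HasPowerExp N (f ^ n) (p ^ n) := by
  induction n with
  | zero => simpa using! const N (1 : k)
  | succ n ih => simpa [pow_succ] using ih.mul h

lemma unique (hN : 0 < N) (h : HasPowerExp N f p) (h' : HasPowerExp N f p') : p = p' := by
  ext n
  exact (algebraMap k ℂ).injective
    (congr_fun (hasSum_qParam_unique (Nat.cast_pos.2 hN) h h') n)

lemma isBoundedAtImInfty (hN : 0 < N) (h : HasPowerExp N f p) : IsBoundedAtImInfty f :=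
  isBoundedAtImInfty_of_hasSum_qExpansion (Nat.cast_pos.2 hN) h

end HasPowerExp

/-- `s` is the Laurent expansion of `f` in `exp (2 π i τ / N)`, with a pole of order at
most `m`. -/
def HasPole (N m : ℕ) (f : ℍ → ℂ) (s : LaurentSeries k) : Prop :=
  MDiff f ∧ ∃ p : PowerSeries k, HahnSeries.single (m : ℤ) 1 * s = HahnSeries.ofPowerSeries ℤ k p ∧
    HasPowerExp N (fun τ ↦ qParam N τ ^ m * f τ) p

lemma HasPole.add_left {m : ℕ} {f : ℍ → ℂ} {s : LaurentSeries k} (h : HasPole N m f s) (l : ℕ) :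
    HasPole N (l + m) f s := by
  obtain ⟨hf, p, hp, h⟩ := h
  refine ⟨hf, PowerSeries.X ^ l * p, ?_, ?_⟩
  · rw [map_mul, ← hp, HahnSeries.ofPowerSeries_X_pow, ← mul_assoc, HahnSeries.single_mul_single]
    simp
  · convert! ((HasPowerExp.qParam_X N).pow l).mul h using 1
    ext τ
    simp [pow_add, mul_assoc]

/-- `s` is the Laurent expansion of the holomorphic function `f` in `exp (2 π i τ / N)`. -/
def HasExp (N : ℕ) (f : ℍ → ℂ) (s : LaurentSeries k) : Prop := ∃ m, HasPole N m f s

namespace HasExp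

variable {f g : ℍ → ℂ} {s t : LaurentSeries k}

lemma const (N : ℕ) (a : k) : HasExp N (fun _ ↦ algebraMap k ℂ a) (HahnSeries.C a) :=
  ⟨0, mdifferentiable_const, PowerSeries.C a, by simp, by simpa using HasPowerExp.const N a⟩

lemma add (h : HasExp N f s) (h' : HasExp N g t) : HasExp N (f + g) (s + t) := by
  obtain ⟨m, h⟩ := h
  obtain ⟨l, h'⟩ := h'
  obtain ⟨hf, p, hp, h⟩ := h.add_left l
  obtain ⟨hg, p', hp', h'⟩ := add_comm l m ▸ h'.add_left m
  refine ⟨l + m, hf.add hg, p + p', by rw [mul_add, hp, hp', map_add], ?_⟩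
  convert! h.add h' using 1
  ext τ
  simp [mul_add]

lemma mul (h : HasExp N f s) (h' : HasExp N g t) : HasExp N (f * g) (s * t) := by
  obtain ⟨m, hf, p, hp, h⟩ := h
  obtain ⟨l, hg, p', hp', h'⟩ := h'
  refine ⟨m + l, hf.mul hg, p * p', ?_, ?_⟩
  · rw [map_mul, ← hp, ← hp', mul_mul_mul_comm, HahnSeries.single_mul_single]
    simp
  · convert! h.mul h' using 1
    ext τ
    simp only [Pi.mul_apply]
    ring

lemma eq_zero_iff (hN : 0 < N) (h : HasExp N f s) : f = 0 ↔ s = 0 := by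
  obtain ⟨m, hf, p, hp, h⟩ := h
  have hsp : s = 0 ↔ p = 0 := by
    rw [← (HahnSeries.ofPowerSeries_injective (Γ := ℤ) (R := k)).eq_iff, map_zero, ← hp]
    simp
  rw [hsp]
  constructor
  · rintro rfl
    refine h.unique hN ?_
    simpa using! HasPowerExp.const N (0 : k)
  · rintro rfl
    ext τ
    have h0 : HasSum (fun n ↦ algebraMap k ℂ ((0 : PowerSeries k).coeff n) * qParam N τ ^ n) 0 := by
      simp
    have := (h τ).unique h0
    simpa [Function.Periodic.qParam_ne_zero] using this

lemma sub (h : HasExp N f s) (h' : HasExp N g t) : HasExp N (f - g) (s - t) := by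
  have := h.add ((const N (-1 : k)).mul h')
  convert! this using 1
  · ext τ; simp [sub_eq_add_neg]
  · simp [sub_eq_add_neg]

lemma unique_right (hN : 0 < N) (h : HasExp N f s) (h' : HasExp N f t) : s = t :=
  sub_eq_zero.1 (((h.sub h').eq_zero_iff hN).1 (sub_self f))

lemma unique_left (hN : 0 < N) (h : HasExp N f s) (h' : HasExp N g s) : f = g :=
  sub_eq_zero.1 (((h.sub h').eq_zero_iff hN).2 (sub_self s))

end HasExp

end Expansions

end JPaper

namespace JPaper
open ModularForm EisensteinSeries
open scoped Manifold
open Function.Periodic (qParam)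
open Filter Topology

/-! ### Expansions of `j` composed with affine maps -/

section JExpansion

variable {k : Type} [Field k] {N : ℕ}

/-- The coefficients of `q * j`. -/
def jCoeff : ℕ → ℚ := exists_expansion_j.choose

lemma jCoeff_zero : jCoeff 0 = 1 := exists_expansion_j.choose_spec.1

lemma hasSum_jCoeff (τ : ℍ) :
    HasSum (fun n ↦ (jCoeff n : ℂ) * qParam 1 τ ^ n) (qParam 1 τ * jFunction τ) :=
  exists_expansion_j.choose_spec.2.1 τ

/-- The power series obtained from `q * j` by substituting `z * X ^ e` for `q`. -/
def jPower (z : k) (e : ℕ) : PowerSeries k :=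
  .mk fun n ↦ if e ∣ n then (jCoeff (n / e) : k) * z ^ (n / e) else 0

/-- The Laurent series obtained from the expansion of `j` by substituting `z * X ^ e` for `q`. -/
def jExp (z : k) (e : ℕ) : LaurentSeries k :=
  HahnSeries.single (-e : ℤ) z⁻¹ * HahnSeries.ofPowerSeries ℤ k (jPower z e)

lemma single_mul_jExp (z : k) (e : ℕ) : HahnSeries.single (e : ℤ) 1 * jExp z e =
    HahnSeries.ofPowerSeries ℤ k (PowerSeries.C z⁻¹ * jPower z e) := by
  rw [jExp, ← mul_assoc, HahnSeries.single_mul_single,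
    (HahnSeries.ofPowerSeries ℤ k).map_mul]
  simp [HahnSeries.C_apply]

lemma constantCoeff_jPower (z : k) (e : ℕ) : PowerSeries.constantCoeff (jPower z e) = 1 := by
  rw [← PowerSeries.coeff_zero_eq_constantCoeff_apply]
  simp [jPower, jCoeff_zero]

lemma order_jExp (z : k) (e : ℕ) : (jExp z e).coeff (-e) = z⁻¹ ∧
    ∀ n : ℤ, n < -e → (jExp z e).coeff n = 0 := by
  constructor
  · have := HahnSeries.coeff_single_mul_add (r := z⁻¹) (a := (0 : ℤ)) (b := (-e : ℤ))
      (x := HahnSeries.ofPowerSeries ℤ k (jPower z e))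
    rw [zero_add] at this
    rw [jExp, this]
    have h0 := HahnSeries.ofPowerSeries_apply_coeff (Γ := ℤ) (jPower z e) 0
    rw [Nat.cast_zero] at h0
    rw [h0, PowerSeries.coeff_zero_eq_constantCoeff_apply, constantCoeff_jPower, mul_one]
  · intro n hn
    rw [jExp, HahnSeries.coeff_single_mul]
    rw [HahnSeries.ofPowerSeries_apply, HahnSeries.embDomain_of_notMem_range, mul_zero]
    rintro ⟨m, hm⟩
    simp at hm
    omega

lemma jExp_injective {z z' : k} {e e' : ℕ} (hz : z ≠ 0) (hz' : z' ≠ 0)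
    (h : jExp z e = jExp z' e') : e = e' ∧ z = z' := by
  obtain ⟨h1, h2⟩ := order_jExp z e
  obtain ⟨h1', h2'⟩ := order_jExp z' e'
  have he : e = e' := by
    rcases lt_trichotomy e e' with hlt | heq | hlt
    · have := h2 (-e') (by omega)
      rw [h, h1'] at this
      exact absurd this (inv_ne_zero hz')
    · exact heq
    · have := h2' (-e) (by omega)
      rw [← h, h1] at this
      exact absurd this (inv_ne_zero hz)
  subst he
  refine ⟨rfl, inv_injective ?_⟩
  rw [← h1, h, h1']

lemma hasPowerExp_jPower [Algebra k ℂ] {z : k} {e : ℕ} (he : 0 < e) {g : ℍ → ℍ}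
    (hg : ∀ τ : ℍ, qParam 1 (g τ) = algebraMap k ℂ z * qParam N τ ^ e) :
    HasPowerExp N (fun τ ↦ qParam 1 (g τ) * jFunction (g τ)) (jPower z e) := by
  intro τ
  have h := hasSum_jCoeff (g τ)
  have hinj : Function.Injective (fun n : ℕ ↦ e * n) := mul_right_injective₀ he.ne'
  rw [← hinj.hasSum_iff]
  · convert! h using 2 with n
    simp only [Function.comp_apply, jPower, PowerSeries.coeff_mk, dvd_mul_right, if_true,
      Nat.mul_div_cancel_left _ he, map_mul, map_ratCast, map_pow, hg]
    ring
  · intro n hn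
    have : ¬ e ∣ n := fun ⟨m, hm⟩ ↦ hn ⟨m, hm.symm⟩
    simp [jPower, this]

lemma hasPole_jExp [Algebra k ℂ] {z : k} (hz : z ≠ 0) {e : ℕ} (he : 0 < e) {g : ℍ → ℍ}
    (hgd : MDiff fun τ ↦ jFunction (g τ))
    (hg : ∀ τ : ℍ, qParam 1 (g τ) = algebraMap k ℂ z * qParam N τ ^ e) :
    HasPole N e (fun τ ↦ jFunction (g τ)) (jExp z e) := by
  refine ⟨hgd, _, single_mul_jExp z e, ?_⟩
  convert! (HasPowerExp.const N z⁻¹).mul (hasPowerExp_jPower he hg) using 1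
  ext τ
  have hz' : algebraMap k ℂ z ≠ 0 := by simpa using hz
  simp only [Pi.mul_apply, hg, map_inv₀]
  field_simp

lemma qParam_one_eq_pow (hN : 0 < N) (τ : ℍ) : qParam 1 τ = qParam N τ ^ N := by
  rw [qParam, qParam, ← Complex.exp_nat_mul]
  congr 1
  have : (N : ℂ) ≠ 0 := Nat.cast_ne_zero.2 hN.ne'
  push_cast
  field_simp

lemma hasPole_j [Algebra k ℂ] (hN : 0 < N) : HasPole N N jFunction (jExp (1 : k) N) :=
  hasPole_jExp one_ne_zero hN (g := id) mdiff_jFunction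
    fun τ ↦ by simp [qParam_one_eq_pow hN τ]

/-- Applying a field endomorphism to the coefficients of a Laurent series. -/
def mapCoeff (σ : k →+* k) : LaurentSeries k →+* LaurentSeries k where
  toFun s := s.map σ
  map_one' := HahnSeries.map_one σ.toMonoidWithZeroHom
  map_mul' _ _ := HahnSeries.map_mul (σ : k →ₙ+* k)
  map_zero' := HahnSeries.map_zero (σ : ZeroHom k k)
  map_add' _ _ := HahnSeries.map_add (σ : k →+ k)

lemma mapCoeff_coeff (σ : k →+* k) (s : LaurentSeries k) (n : ℤ) :
    (mapCoeff σ s).coeff n = σ (s.coeff n) := rfl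

lemma mapCoeff_C (σ : k →+* k) (a : k) : mapCoeff σ (HahnSeries.C a) = HahnSeries.C (σ a) :=
  HahnSeries.map_C a σ

lemma mapCoeff_ofPowerSeries (σ : k →+* k) (p : PowerSeries k) :
    mapCoeff σ (HahnSeries.ofPowerSeries ℤ k p) = HahnSeries.ofPowerSeries ℤ k (p.map σ) := by
  ext n
  rw [mapCoeff_coeff]
  rcases le_or_gt 0 n with hn | hn
  · lift n to ℕ using hn
    simp only [HahnSeries.ofPowerSeries_apply_coeff, PowerSeries.coeff_map]
  · have h : n ∉ Set.range (Nat.castOrderEmbedding (α := ℤ)) := by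
      rintro ⟨m, hm⟩
      simp at hm
      omega
    simp only [HahnSeries.ofPowerSeries_apply, HahnSeries.embDomain_of_notMem_range h, map_zero]

lemma mapCoeff_jExp (σ : k →+* k) (z : k) (e : ℕ) : mapCoeff σ (jExp z e) = jExp (σ z) e := by
  rw [jExp, map_mul, mapCoeff_ofPowerSeries, jExp]
  congr 1
  · rw [← map_inv₀]
    exact HahnSeries.map_single (σ : ZeroHom k k)
  · congr 1
    ext n
    simp only [PowerSeries.coeff_map, jPower, PowerSeries.coeff_mk]
    split_ifs <;> simp

end JExpansion

end JPaper

namespace JPaper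
open ModularForm EisensteinSeries
open scoped Manifold
open Function.Periodic (qParam)
open Filter Topology

/-! ### Functions of level one -/

section LevelOne

variable {F k : Type} [Field F] [Field k] [Algebra F k] {N : ℕ}

/-- Evaluation of polynomials over `F` at the expansion of `j`. -/
def evalJ (F k : Type) [Field F] [Field k] [Algebra F k] (N : ℕ) :
    Polynomial F →+* LaurentSeries k :=
  Polynomial.eval₂RingHom (HahnSeries.C.comp (algebraMap F k)) (jExp 1 N)

lemma mapCoeff_evalJ (σ : k ≃ₐ[F] k) (P : Polynomial F) :
    mapCoeff (σ : k →+* k) (evalJ F k N P) = evalJ F k N P := by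
  suffices (mapCoeff (σ : k →+* k)).comp (evalJ F k N) = evalJ F k N from
    RingHom.congr_fun this P
  refine Polynomial.ringHom_ext (fun a ↦ ?_) ?_
  · simp only [RingHom.comp_apply, evalJ, Polynomial.coe_eval₂RingHom, Polynomial.eval₂_C,
      mapCoeff_C]
    simp
  · simp [evalJ, mapCoeff_jExp]

variable [Algebra k ℂ]

lemma qParam_vadd_one (hN : 0 < N) (τ : ℍ) : qParam N ((1 : ℝ) +ᵥ τ : ℍ) =
    Complex.exp (2 * Real.pi * Complex.I / N) * qParam N τ := by
  rw [qParam, qParam, ← Complex.exp_add]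
  congr 1
  have : (N : ℂ) ≠ 0 := Nat.cast_ne_zero.2 hN.ne'
  simp only [coe_vadd]
  push_cast
  field_simp

lemma dvd_of_constantCoeff_ne_zero (hN : 0 < N) {m : ℕ} {f : ℍ → ℂ} {p : PowerSeries k}
    (hinv : ∀ τ : ℍ, f ((1 : ℝ) +ᵥ τ) = f τ)
    (hp : HasPowerExp N (fun τ ↦ qParam N τ ^ m * f τ) p)
    (h0 : PowerSeries.constantCoeff p ≠ 0) : N ∣ m := by
  set ζ : ℂ := Complex.exp (2 * Real.pi * Complex.I / N) with hζ
  have hprim : IsPrimitiveRoot ζ N := Complex.isPrimitiveRoot_exp N hN.ne'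
  have h := congr_fun (hasSum_qParam_unique (h := N) (Nat.cast_pos.2 hN)
    (f := fun τ ↦ ζ ^ m * (qParam N τ ^ m * f τ))
    (c := fun n ↦ algebraMap k ℂ (p.coeff n) * ζ ^ n)
    (d := fun n ↦ ζ ^ m * algebraMap k ℂ (p.coeff n)) (fun τ ↦ ?_) fun τ ↦ ?_) 0
  · rw [PowerSeries.coeff_zero_eq_constantCoeff_apply, pow_zero, mul_comm] at h
    have h1 : algebraMap k ℂ (PowerSeries.constantCoeff p) ≠ 0 := by simpa using h0
    exact (hprim.pow_eq_one_iff_dvd m).1 (mul_right_cancel₀ h1 h).symm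
  · convert! hp ((1 : ℝ) +ᵥ τ) using 1
    · ext n
      rw [qParam_vadd_one hN, mul_pow]
      ring
    · simp only [hinv, qParam_vadd_one hN, mul_pow, ← hζ]
      ring
  · simpa only [mul_assoc] using (hp τ).mul_left (ζ ^ m)

lemma hasExp_evalJ (hN : 0 < N) (P : Polynomial F) :
    HasExp N (fun τ ↦ P.eval₂ ((algebraMap k ℂ).comp (algebraMap F k)) (jFunction τ))
      (evalJ F k N P) := by
  induction P using Polynomial.induction_on' with
  | add P Q hP hQ =>
    convert! hP.add hQ using 1
    · ext τ; simp
    · simp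
  | monomial n a =>
    have hpow : HasExp N (jFunction ^ n) ((jExp (1 : k) N) ^ n) := by
      induction n with
      | zero => simpa using! HasExp.const N (1 : k)
      | succ n ih => simpa only [pow_succ] using ih.mul ⟨N, hasPole_j hN⟩
    convert! (HasExp.const N (algebraMap F k a)).mul hpow using 1
    · ext τ; simp
    · simp [evalJ]

lemma evalJ_injective (hN : 0 < N) : Function.Injective (evalJ F k N) := by
  rw [injective_iff_map_eq_zero]
  intro P hP
  have h := hasExp_evalJ (k := k) hN P
  rw [hP] at h
  have h0 := (h.eq_zero_iff hN).2 rfl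
  have hroot (z : ℂ) : (P.map ((algebraMap k ℂ).comp (algebraMap F k))).eval z = 0 := by
    obtain ⟨τ, rfl⟩ := jFunction_surjective z
    rw [Polynomial.eval_map]
    exact congr_fun h0 τ
  have := Polynomial.zero_of_eval_zero _ hroot
  exact (Polynomial.map_eq_zero _).1 this

theorem exists_evalJ_eq (hN : 0 < N)
    (hF : ∀ a : k, (∀ σ : k ≃ₐ[F] k, σ a = a) → ∃ b : F, algebraMap F k b = a)
    {f : ℍ → ℂ} {s : LaurentSeries k} (h : HasExp N f s)
    (hinv : ∀ (γ : SL(2, ℤ)) (τ : ℍ), f (γ • τ) = f τ)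
    (hs : ∀ σ : k ≃ₐ[F] k, mapCoeff (σ : k →+* k) s = s) :
    ∃ P : Polynomial F, evalJ F k N P = s := by
  obtain ⟨m, h⟩ := h
  induction m generalizing f s with
  | zero =>
    obtain ⟨hf, p, hp, hfp⟩ := h
    simp only [pow_zero, one_mul] at hfp
    obtain ⟨c, hc⟩ := eq_const_of_invariant hf hinv (hfp.isBoundedAtImInfty hN)
    have hcoeff := hasSum_qParam_unique (h := N) (Nat.cast_pos.2 hN) hfp
      (d := fun n ↦ if n = 0 then c else 0) (fun τ ↦ by
        convert! hasSum_single (f := fun n : ℕ ↦ (if n = 0 then c else 0) * qParam N τ ^ n) 0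
          (fun n hn ↦ ?_) using 1
        · simp [hc]
        · simp [hn])
    have hpC : p = PowerSeries.C (PowerSeries.constantCoeff p) := by
      ext n
      rw [PowerSeries.coeff_C]
      split_ifs with hn
      · simp [hn]
      · have := congr_fun hcoeff n
        simpa [hn] using this
    have hsC : s = HahnSeries.C (PowerSeries.constantCoeff p) := by
      rw [← HahnSeries.ofPowerSeries_C, ← hpC, ← hp]
      simp
    obtain ⟨b, hb⟩ := hF (PowerSeries.constantCoeff p) fun σ ↦ by
      have := hs σ
      rw [hsC, mapCoeff_C] at this
      exact HahnSeries.C_injective this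
    exact ⟨Polynomial.C b, by simp [evalJ, hb, hsC]⟩
  | succ m ih =>
    obtain ⟨hf, p, hp, hfp⟩ := h
    have hper (τ : ℍ) : f ((1 : ℝ) +ᵥ τ) = f τ := by rw [← modular_T_smul, hinv]
    have reduce : ∀ {g : ℍ → ℂ} {t : LaurentSeries k} {u : PowerSeries k}, MDiff g →
        HahnSeries.single ((m + 1 : ℕ) : ℤ) 1 * t = HahnSeries.ofPowerSeries ℤ k u →
        HasPowerExp N (fun τ ↦ qParam N τ ^ (m + 1) * g τ) u →
        PowerSeries.constantCoeff u = 0 → HasPole N m g t := by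
      intro g t u hg hu hgu hu0
      obtain ⟨u', rfl⟩ := PowerSeries.X_dvd_iff.2 hu0
      refine ⟨hg, u', ?_, fun τ ↦ ?_⟩
      · have hsplit : HahnSeries.single ((m + 1 : ℕ) : ℤ) (1 : k) =
            HahnSeries.single (1 : ℤ) 1 * HahnSeries.single (m : ℤ) 1 := by
          rw [HahnSeries.single_mul_single, mul_one, Nat.cast_succ, add_comm]
        rw [map_mul, HahnSeries.ofPowerSeries_X, hsplit, mul_assoc] at hu
        exact mul_left_cancel₀ (HahnSeries.single_ne_zero one_ne_zero) hu
      · have hq : qParam N (τ : ℂ) ≠ 0 := Function.Periodic.qParam_ne_zero _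
        have h1 := hgu τ
        rw [hasSum_nat_add_iff' 1 |>.symm] at h1
        simp only [Finset.range_one, Finset.sum_singleton, PowerSeries.coeff_zero_X_mul, map_zero,
          zero_mul, sub_zero, PowerSeries.coeff_succ_X_mul] at h1
        convert! h1.mul_left (qParam N (τ : ℂ))⁻¹ using 1
        · ext n
          field_simp
          ring
        · field_simp
          ring
    by_cases h0 : PowerSeries.constantCoeff p = 0
    · exact ih hinv hs (reduce hf hp hfp h0)
    obtain ⟨l, hl⟩ := dvd_of_constantCoeff_ne_zero hN hper hfp h0
    set a := PowerSeries.constantCoeff p with ha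
    obtain ⟨b, hb⟩ := hF a fun σ ↦ by
      have h1 := congr_arg (HahnSeries.coeff · 0) hp
      have h2 : (HahnSeries.ofPowerSeries ℤ k p).coeff 0 = a := by
        have := HahnSeries.ofPowerSeries_apply_coeff (Γ := ℤ) p 0
        simpa using this
      simp only [h2, HahnSeries.coeff_single_mul, one_mul] at h1
      rw [← h1]
      nth_rw 2 [← hs σ]
      rfl
    obtain ⟨hj, u, hu, hju⟩ := hasPole_j (k := k) hN
    have hu0 : PowerSeries.constantCoeff u = 1 := by
      have : u = PowerSeries.C (1 : k)⁻¹ * jPower 1 N :=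
        HahnSeries.ofPowerSeries_injective (Γ := ℤ) (hu.symm.trans (single_mul_jExp 1 N))
      rw [this, map_mul, constantCoeff_jPower]
      simp
    have hnew : HasPole N m (f - fun τ ↦ algebraMap k ℂ a * jFunction τ ^ l)
        (s - HahnSeries.C a * jExp 1 N ^ l) := by
      refine reduce (u := p - PowerSeries.C a * u ^ l) (hf.sub ?_) ?_ ?_ ?_
      · exact mdifferentiable_const.mul (mdiff_jFunction.pow l)
      · rw [mul_sub, hp, map_sub, map_mul, map_pow, ← hu, mul_pow, HahnSeries.single_pow,
          HahnSeries.ofPowerSeries_C, hl]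
        simp only [nsmul_eq_mul, one_pow, Nat.cast_mul, mul_comm (l : ℤ)]
        ring
      · have h1 := hfp.add ((HasPowerExp.const N (-a)).mul (hju.pow l))
        convert! h1 using 1
        · ext τ
          simp only [Pi.sub_apply, Pi.add_apply, Pi.mul_apply, Pi.pow_apply, map_neg, hl]
          ring
        · simp [sub_eq_add_neg]
      · simp [hu0, ← ha]
    obtain ⟨P, hP⟩ := ih (f := f - fun τ ↦ algebraMap k ℂ a * jFunction τ ^ l)
      (fun γ τ ↦ by simp only [Pi.sub_apply, hinv, jFunction_smul]) (fun σ ↦ by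
        rw [map_sub, hs, map_mul, map_pow, mapCoeff_jExp, mapCoeff_C, map_one]
        simp [← hb]) hnew
    refine ⟨P + Polynomial.C b * Polynomial.X ^ l, ?_⟩
    rw [map_add, hP]
    simp [evalJ, hb]

end LevelOne

end JPaper

namespace JPaper

/-! ### Integral matrices of determinant `N` and unimodular rows modulo `N` -/

section Rows

variable {N : ℕ}

lemma exists_isCoprime_add_mul {a b d : ℤ} (ha : a ≠ 0)
    (h : ∀ p : ℤ, Prime p → p ∣ a → p ∣ b → ¬ p ∣ d) : ∃ y : ℤ, IsCoprime a (b + y * d) := by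
  set s := a.natAbs.primeFactors.filter fun p : ℕ ↦ ¬ (p : ℤ) ∣ b with hs
  refine ⟨∏ p ∈ s, (p : ℤ), isCoprime_of_prime_dvd (fun h ↦ ha h.1) fun z hz hza hzb ↦ ?_⟩
  by_cases hb : z ∣ b
  · rcases hz.dvd_or_dvd ((dvd_add_right hb).1 hzb) with hzs | hzd
    · obtain ⟨p, hp, hzp⟩ := (hz.dvd_finsetProd_iff _).1 hzs
      rw [hs, Finset.mem_filter, Nat.mem_primeFactors] at hp
      have hass := hz.associated_of_dvd (Nat.prime_iff_prime_int.1 hp.1.1) hzp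
      exact hp.2 (hass.dvd_iff_dvd_left.1 hb)
    · exact h z hz hza hb hzd
  · have hmem : z.natAbs ∈ s := by
      rw [hs, Finset.mem_filter, Nat.mem_primeFactors]
      refine ⟨⟨Int.prime_iff_natAbs_prime.1 hz, Int.natAbs_dvd_natAbs.2 hza, by simpa using ha⟩, ?_⟩
      rwa [Int.natAbs_dvd]
    have hdvd : z ∣ ∏ p ∈ s, (p : ℤ) :=
      (Int.dvd_natAbs.2 dvd_rfl).trans (Finset.dvd_prod_of_mem (fun p : ℕ ↦ (p : ℤ)) hmem)
    exact hb ((dvd_add_left (hdvd.mul_right d)).1 hzb)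

/-- The integral matrix `A` has determinant `N`, and `v` lies in the span of its rows
modulo `N`. -/
def Adapted (A : Matrix (Fin 2) (Fin 2) ℤ) (v : Fin 2 → ZMod N) : Prop :=
  A.det = N ∧ ∃ x y : ZMod N, ∀ i, x * (A 0 i : ZMod N) + y * (A 1 i : ZMod N) = v i

lemma Adapted.det_cast {A : Matrix (Fin 2) (Fin 2) ℤ} {v : Fin 2 → ZMod N} (h : Adapted A v) :
    (A 0 0 : ZMod N) * A 1 1 - A 0 1 * A 1 0 = 0 := by
  have := congr_arg (Int.cast : ℤ → ZMod N) h.1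
  rw [det_fin_two] at this
  simpa using this

lemma Adapted.row_eq {A : Matrix (Fin 2) (Fin 2) ℤ} {v : Fin 2 → ZMod N} (h : Adapted A v)
    (hv : IsCoprime (v 0) (v 1)) (i : Fin 2) : ∃ u : ZMod N, ∀ j, (A i j : ZMod N) = u * v j := by
  obtain ⟨x, y, hxy⟩ := h.2
  obtain ⟨s, t, hst⟩ := hv
  have hd := h.det_cast
  have h0 := hxy 0
  have h1 := hxy 1
  refine ⟨s * A i 0 + t * A i 1, fun j ↦ ?_⟩
  have hw : (A i 0 : ZMod N) * v 1 = A i 1 * v 0 := by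
    rw [← h0, ← h1]
    fin_cases i
    · simp only [Fin.zero_eta]
      linear_combination y * hd
    · simp only [Fin.mk_one]
      linear_combination -x * hd
  fin_cases j
  · simp only [Fin.zero_eta]
    linear_combination (-(A i 0 : ZMod N)) * hst + t * hw
  · simp only [Fin.mk_one]
    linear_combination (-(A i 1 : ZMod N)) * hst - s * hw

lemma Adapted.exists_eq_mul (hN : 0 < N) {A B : Matrix (Fin 2) (Fin 2) ℤ} {v : Fin 2 → ZMod N}
    (hv : IsCoprime (v 0) (v 1)) (hA : Adapted A v) (hB : Adapted B v) :
    ∃ C : SL(2, ℤ), A = C * B := by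
  have hN' : (N : ℤ) ≠ 0 := by exact_mod_cast hN.ne'
  have hdvd : ∀ i j, (N : ℤ) ∣ (A * B.adjugate) i j := by
    intro i j
    obtain ⟨u, hu⟩ := hA.row_eq hv i
    obtain ⟨w, hw⟩ := hB.row_eq hv 0
    obtain ⟨w', hw'⟩ := hB.row_eq hv 1
    rw [← ZMod.intCast_zmod_eq_zero_iff_dvd, mul_apply, Fin.sum_univ_two, adjugate_fin_two]
    fin_cases j
    · simp [hu, hw']
      ring
    · simp [hu, hw]
      ring
  choose C hC using hdvd
  have hAC : A * B.adjugate = (N : ℤ) • Matrix.of C := by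
    ext i j
    simp [hC]
  have hdet : (Matrix.of C).det = 1 := by
    have := congr_arg det hAC
    rw [det_mul, det_adjugate, hA.1, hB.1, det_smul] at this
    simp only [Fintype.card_fin] at this
    have h2 : (N : ℤ) ^ 2 * (Matrix.of C).det = (N : ℤ) ^ 2 * 1 := by
      rw [← this]; ring
    exact mul_left_cancel₀ (pow_ne_zero 2 hN') h2
  refine ⟨⟨Matrix.of C, hdet⟩, ?_⟩
  have h1 : (N : ℤ) • A = (N : ℤ) • (Matrix.of C * B) := by
    rw [← Matrix.smul_mul, ← hAC, Matrix.mul_assoc, adjugate_mul, hB.1, Matrix.mul_smul,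
      Matrix.mul_one]
  exact smul_right_injective _ hN' h1

/-- The action of integral unimodular matrices on rows modulo `N`. -/
lemma Adapted.mul {A : Matrix (Fin 2) (Fin 2) ℤ} {v : Fin 2 → ZMod N} (h : Adapted A v)
    (γ : SL(2, ℤ)) : Adapted (A * γ) (v ᵥ* (γ : Matrix (Fin 2) (Fin 2) ℤ).map Int.cast) := by
  obtain ⟨hd, x, y, hxy⟩ := h
  refine ⟨by simp [det_mul, hd], x, y, fun i ↦ ?_⟩
  simp only [mul_apply, Fin.sum_univ_two, vecMul, dotProduct, ← hxy, map_apply]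
  push_cast
  ring

lemma Adapted.smul {A : Matrix (Fin 2) (Fin 2) ℤ} {v : Fin 2 → ZMod N} (h : Adapted A v)
    (u : ZMod N) : Adapted A (u • v) := by
  obtain ⟨hd, x, y, hxy⟩ := h
  refine ⟨hd, u * x, u * y, fun i ↦ ?_⟩
  rw [Pi.smul_apply, smul_eq_mul, ← hxy]
  ring

lemma exists_unit_smul_of_adapted {A : Matrix (Fin 2) (Fin 2) ℤ} {v w : Fin 2 → ZMod N}
    (hv : IsCoprime (v 0) (v 1)) (hw : IsCoprime (w 0) (w 1)) (hAv : Adapted A v)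
    (hAw : Adapted A w) : ∃ u : (ZMod N)ˣ, w = (u : ZMod N) • v := by
  obtain ⟨x, y, hxy⟩ := hAw.2
  obtain ⟨a, ha⟩ := hAv.row_eq hv 0
  obtain ⟨b, hb⟩ := hAv.row_eq hv 1
  have hu : ∀ i, w i = (x * a + y * b) * v i := fun i ↦ by
    rw [← hxy, ha, hb]; ring
  obtain ⟨s, t, hst⟩ := hw
  have hunit : IsUnit (x * a + y * b) := by
    refine IsUnit.of_mul_eq_one (s * v 0 + t * v 1) ?_
    rw [← hst, hu 0, hu 1]; ring
  exact ⟨hunit.unit, funext fun i ↦ by simpa using hu i⟩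

lemma exists_triangular_adapted (hN : 0 < N) (v : Fin 2 → ZMod N) :
    ∃ a b d : ℕ, a * d = N ∧ Adapted !![(a : ℤ), b; 0, d] v := by
  have : NeZero N := ⟨hN.ne'⟩
  set m := (v 0).val with hm
  set a := Nat.gcd m N with ha
  obtain ⟨d, hd⟩ : a ∣ N := Nat.gcd_dvd_right m N
  obtain ⟨x, hx⟩ : a ∣ m := Nat.gcd_dvd_left m N
  have ha0 : 0 < a := Nat.gcd_pos_of_pos_right m hN
  have hxd : Nat.Coprime x d := by
    have h1 : Nat.gcd (a * x) (a * d) = a * 1 := by rw [← hx, ← hd, ← ha, mul_one]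
    rw [Nat.gcd_mul_left] at h1
    exact Nat.eq_of_mul_eq_mul_left ha0 h1
  have hd0 : 0 < d := Nat.pos_of_ne_zero (by rintro rfl; simp at hd; omega)
  have : NeZero d := ⟨hd0.ne'⟩
  set b := (((v 1).val : ZMod d) * (x : ZMod d)⁻¹).val with hb
  have hbd : (d : ℤ) ∣ (v 1).val - x * b := by
    rw [← ZMod.intCast_zmod_eq_zero_iff_dvd]
    have hinv := ZMod.coe_mul_inv_eq_one x hxd
    push_cast
    rw [hb, ZMod.natCast_zmod_val]
    linear_combination (-((v 1).val : ZMod d)) * hinv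
  obtain ⟨y, hy⟩ := hbd
  refine ⟨a, b, d, hd.symm, ?_, x, y, fun i ↦ ?_⟩
  · rw [det_fin_two_of, hd]
    push_cast
    ring
  · fin_cases i
    · have h0 : v 0 = ((a * x : ℕ) : ZMod N) := by rw [← hx, hm, ZMod.natCast_zmod_val]
      simp [h0, mul_comm]
    · have h1 : v 1 = ((x * b + d * y : ℤ) : ZMod N) := by
        rw [← hy]; simp
      simp [h1, mul_comm]

lemma Adapted.twist {a b d : ℕ} {v : Fin 2 → ZMod N} (h : Adapted !![(a : ℤ), b; 0, d] v)
    (χ : ℕ) : Adapted !![(a : ℤ), (χ * b : ℕ); 0, d] ![v 0, v 1 * χ] := by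
  obtain ⟨hd, x, y, hxy⟩ := h
  refine ⟨by simpa [det_fin_two_of] using hd, x, y * χ, fun i ↦ ?_⟩
  have h0 := hxy 0
  have h1 := hxy 1
  fin_cases i
  · simpa using h0
  · simp at h1
    simp [← h1]
    ring

lemma Adapted.isPrimitive {A : Matrix (Fin 2) (Fin 2) ℤ} {v : Fin 2 → ZMod N}
    (hv : IsCoprime (v 0) (v 1)) (h : Adapted A v) : IsPrimitiveIntMatrix A := by
  unfold IsPrimitiveIntMatrix
  set g := Int.gcd (Int.gcd (A 0 0) (A 0 1)) (Int.gcd (A 1 0) (A 1 1)) with hg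
  have h0 : (g : ℤ) ∣ Int.gcd (A 0 0) (A 0 1) := Int.gcd_dvd_left _ _
  have h1 : (g : ℤ) ∣ Int.gcd (A 1 0) (A 1 1) := Int.gcd_dvd_right _ _
  obtain ⟨p, hp⟩ := h0.trans (Int.gcd_dvd_left _ _)
  obtain ⟨q, hq⟩ := h0.trans (Int.gcd_dvd_right _ _)
  obtain ⟨r, hr⟩ := h1.trans (Int.gcd_dvd_left _ _)
  obtain ⟨s, hs⟩ := h1.trans (Int.gcd_dvd_right _ _)
  obtain ⟨hd, x, y, hxy⟩ := h
  obtain ⟨m, n, hmn⟩ := hv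
  have hgN : g ∣ N := by
    rw [det_fin_two, hp, hq, hr, hs] at hd
    exact Int.natCast_dvd_natCast.1 ⟨p * (g * s) - q * (g * r), by rw [← hd]; ring⟩
  have hunit : IsUnit (g : ZMod N) := by
    refine IsUnit.of_mul_eq_one (m * (x * p + y * r) + n * (x * q + y * s)) ?_
    rw [← hmn, ← hxy, ← hxy, hp, hq, hr, hs]
    push_cast
    ring
  rw [ZMod.isUnit_iff_coprime] at hunit
  exact Nat.Coprime.eq_one_of_dvd hunit hgN

lemma IsPrimitiveIntMatrix.exists_adapted (hN : 0 < N) {A : Matrix (Fin 2) (Fin 2) ℤ}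
    (hA : IsPrimitiveIntMatrix A) (hd : A.det = N) :
    ∃ v : Fin 2 → ZMod N, IsCoprime (v 0) (v 1) ∧ Adapted A v := by
  have hN' : (N : ℤ) ≠ 0 := by exact_mod_cast hN.ne'
  rw [det_fin_two] at hd
  set g : ℤ := ((Int.gcd (A 0 0) (A 1 0) : ℕ) : ℤ) with hg
  obtain ⟨p, hp⟩ : g ∣ A 0 0 := Int.gcd_dvd_left _ _
  obtain ⟨q, hq⟩ : g ∣ A 1 0 := Int.gcd_dvd_right _ _
  have hg0 : g ≠ 0 := by
    intro h0
    rw [hp, hq, h0] at hd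
    simp at hd
    exact hN' (by exact_mod_cast hd.symm)
  set s := Int.gcdA (A 0 0) (A 1 0)
  set t := Int.gcdB (A 0 0) (A 1 0)
  have hbez : g = A 0 0 * s + A 1 0 * t := Int.gcd_eq_gcd_ab _ _
  have hst : p * s + q * t = 1 := by
    refine mul_left_cancel₀ hg0 ?_
    linear_combination -hbez - s * hp - t * hq
  set b := s * A 0 1 + t * A 1 1 with hb
  set d := p * A 1 1 - q * A 0 1 with hdd
  have h01 : A 0 1 = p * b - t * d := by rw [hb, hdd]; linear_combination (-A 0 1) * hst
  have h11 : A 1 1 = q * b + s * d := by rw [hb, hdd]; linear_combination (-A 1 1) * hst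
  obtain ⟨y, hy⟩ := exists_isCoprime_add_mul (b := b) (d := d) hg0 fun z hz hzg hzb hzd ↦ by
    have h1 : z ∣ (1 : ℕ) := by
      rw [← hA]
      refine Int.dvd_coe_gcd (Int.dvd_coe_gcd ?_ ?_) (Int.dvd_coe_gcd ?_ ?_)
      · rw [hp]; exact hzg.mul_right _
      · rw [h01]; exact dvd_sub (hzb.mul_left _) (hzd.mul_left _)
      · rw [hq]; exact hzg.mul_right _
      · rw [h11]; exact dvd_add (hzb.mul_left _) (hzd.mul_left _)
    exact hz.not_isUnit (isUnit_of_dvd_one (by simpa using h1))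
  refine ⟨![(g : ZMod N), ((b + y * d : ℤ) : ZMod N)], ?_, ?_, (s - y * q : ℤ), (t + y * p : ℤ),
    fun i ↦ ?_⟩
  · simpa using hy.map (Int.castRingHom (ZMod N))
  · rw [det_fin_two, hd]
  · fin_cases i
    · simp only [Fin.zero_eta, cons_val_zero, ← Int.cast_mul, ← Int.cast_add]
      congr 1
      rw [hp, hq]
      linear_combination g * hst
    · simp only [Fin.mk_one, cons_val_one, cons_val_zero, ← Int.cast_mul, ← Int.cast_add]
      congr 1
      rw [hb, hdd]
      ring

lemma exists_SL2_lift (hN : 0 < N) (M : SL(2, ZMod N)) :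
    ∃ γ : SL(2, ℤ), SpecialLinearGroup.map (Int.castRingHom (ZMod N)) γ = M := by
  have : NeZero N := ⟨hN.ne'⟩
  have hN' : (N : ℤ) ≠ 0 := by exact_mod_cast hN.ne'
  have hdet : M 0 0 * M 1 1 - M 0 1 * M 1 0 = 1 := by rw [← det_fin_two]; exact M.2
  obtain ⟨c, hc0, hc⟩ : ∃ c : ℤ, c ≠ 0 ∧ (c : ZMod N) = M 1 0 := by
    by_cases h : (M 1 0).val = 0
    · exact ⟨N, hN', by rw [(ZMod.val_eq_zero _).1 h]; simp⟩
    · exact ⟨(M 1 0).val, by exact_mod_cast h, by simp⟩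
  obtain ⟨y, hy⟩ := exists_isCoprime_add_mul (b := ((M 1 1).val : ℤ)) (d := N) hc0
    fun p hp hpc hpd hpN ↦ by
      have h1 : (N : ℤ) ∣ ((M 0 0).val * (M 1 1).val - (M 0 1).val * c) - 1 := by
        rw [← ZMod.intCast_zmod_eq_zero_iff_dvd]
        push_cast
        rw [hc]
        simp [hdet]
      have h2 : p ∣ 1 := by
        have := (dvd_sub (hpd.mul_left ((M 0 0).val : ℤ)) (hpc.mul_left ((M 0 1).val : ℤ)))
        simpa using dvd_sub this (hpN.trans h1)
      exact hp.not_isUnit (isUnit_of_dvd_one h2)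
  obtain ⟨δ, hδ⟩ := hy.exists_SL2_row 1
  have hδ0 : ((δ 1 0 : ℤ) : ZMod N) = M 1 0 := by rw [hδ.1, hc]
  have hδ1 : ((δ 1 1 : ℤ) : ZMod N) = M 1 1 := by rw [hδ.2]; simp
  have hδd : ((δ 0 0 : ℤ) : ZMod N) * (δ 1 1 : ℤ) - (δ 0 1 : ℤ) * (δ 1 0 : ℤ) = 1 := by
    have := δ.2
    rw [det_fin_two] at this
    exact_mod_cast congr_arg (Int.cast : ℤ → ZMod N) this
  rw [hδ0, hδ1] at hδd
  set e : ℤ := (((M 0 1 * ((δ 0 0 : ℤ) : ZMod N) - M 0 0 * ((δ 0 1 : ℤ) : ZMod N)).val : ℕ) : ℤ)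
    with he
  have heZ : (e : ZMod N) = M 0 1 * ((δ 0 0 : ℤ) : ZMod N) - M 0 0 * ((δ 0 1 : ℤ) : ZMod N) := by
    simp [he]
  refine ⟨⟨!![δ 0 0 + e * δ 1 0, δ 0 1 + e * δ 1 1; δ 1 0, δ 1 1], ?_⟩, ?_⟩
  · have := δ.2
    rw [det_fin_two] at this
    rw [det_fin_two_of]
    linear_combination this
  · ext i j
    fin_cases i <;> fin_cases j
    · change ((δ 0 0 + e * δ 1 0 : ℤ) : ZMod N) = M 0 0
      push_cast
      rw [heZ, hδ0]
      linear_combination (-((δ 0 0 : ℤ) : ZMod N)) * hdet + M 0 0 * hδd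
    · change ((δ 0 1 + e * δ 1 1 : ℤ) : ZMod N) = M 0 1
      push_cast
      rw [heZ, hδ1]
      linear_combination (-((δ 0 1 : ℤ) : ZMod N)) * hdet + M 0 1 * hδd
    · exact hδ0
    · exact hδ1

end Rows

end JPaper

namespace JPaper
open scoped Manifold
open Function.Periodic (qParam)

/-! ### The conjugates of `j` indexed by unimodular rows -/

section IntGL

variable {A B : Matrix (Fin 2) (Fin 2) ℤ}

/-- An integral matrix of nonzero determinant, viewed in `GL₂(ℝ)`. -/
def intGL (A : Matrix (Fin 2) (Fin 2) ℤ) : GL (Fin 2) ℝ :=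
  if h : (A.map (Int.cast : ℤ → ℝ)).det ≠ 0 then GeneralLinearGroup.mkOfDetNeZero _ h else 1

lemma det_map_intCast (A : Matrix (Fin 2) (Fin 2) ℤ) :
    (A.map (Int.cast : ℤ → ℝ)).det = (A.det : ℝ) := by
  simp [det_fin_two]

lemma coe_intGL (hA : A.det ≠ 0) :
    (intGL A : Matrix (Fin 2) (Fin 2) ℝ) = A.map (Int.cast : ℤ → ℝ) := by
  have h : (A.map (Int.cast : ℤ → ℝ)).det ≠ 0 := by
    rw [det_map_intCast]; exact_mod_cast hA
  rw [intGL, dif_pos h]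
  rfl

lemma intGL_mul (hA : A.det ≠ 0) (hB : B.det ≠ 0) : intGL (A * B) = intGL A * intGL B := by
  refine Units.ext ?_
  rw [Units.val_mul, coe_intGL hA, coe_intGL hB, coe_intGL (by simp [det_mul, hA, hB])]
  ext i j
  simp [mul_apply]

lemma det_intGL_pos (hA : 0 < A.det) : 0 < (intGL A).det.val := by
  rw [GeneralLinearGroup.val_det_apply, coe_intGL hA.ne', det_map_intCast]
  exact_mod_cast hA

lemma intGL_coe_smul (γ : SL(2, ℤ)) (τ : ℍ) :
    intGL (γ : Matrix (Fin 2) (Fin 2) ℤ) • τ = γ • τ := by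
  have h : intGL (γ : Matrix (Fin 2) (Fin 2) ℤ) =
      SpecialLinearGroup.toGL (SpecialLinearGroup.map (algebraMap ℤ ℝ) γ) :=
    Units.ext (coe_intGL (by rw [γ.2]; exact one_ne_zero))
  rw [h]
  rfl

lemma jFunction_intGL_mul (γ : SL(2, ℤ)) (hB : B.det ≠ 0) (τ : ℍ) :
    jFunction (intGL (γ * B) • τ) = jFunction (intGL B • τ) := by
  rw [intGL_mul (by simp) hB, mul_smul, intGL_coe_smul, jFunction_smul]

lemma intGL_mul_smul (hA : A.det ≠ 0) (γ : SL(2, ℤ)) (τ : ℍ) :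
    intGL (A * γ) • τ = intGL A • γ • τ := by
  rw [intGL_mul hA (by simp), mul_smul, intGL_coe_smul]

lemma coe_intGL_triangular_smul {a b d : ℕ} (h : 0 < a * d) (τ : ℍ) :
    ((intGL !![(a : ℤ), b; 0, d] • τ : ℍ) : ℂ) = (a * τ + b) / d := by
  have hdet : 0 < (!![(a : ℤ), b; 0, d]).det := by
    rw [det_fin_two_of]; simpa using (by exact_mod_cast h : (0 : ℤ) < a * d)
  rw [coe_smul_of_det_pos (det_intGL_pos hdet), num, denom, coe_intGL hdet.ne']
  simp

end IntGL

/-- Unimodular rows of length two over `ℤ/N`. -/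
def UniRow (N : ℕ) : Type := {v : Fin 2 → ZMod N // IsCoprime (v 0) (v 1)}

section UniRow

variable {N : ℕ}

instance [NeZero N] : Finite (UniRow N) := Subtype.finite

lemma isCoprime_vecMul {v : Fin 2 → ZMod N} (hv : IsCoprime (v 0) (v 1))
    (g : GL (Fin 2) (ZMod N)) :
    IsCoprime ((v ᵥ* (g : Matrix (Fin 2) (Fin 2) (ZMod N))) 0)
      ((v ᵥ* (g : Matrix (Fin 2) (Fin 2) (ZMod N))) 1) := by
  obtain ⟨s, t, hst⟩ := hv
  set w := (g⁻¹ : GL (Fin 2) (ZMod N)).val *ᵥ ![s, t] with hw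
  refine ⟨w 0, w 1, ?_⟩
  have h : (v ᵥ* (g : Matrix (Fin 2) (Fin 2) (ZMod N))) ⬝ᵥ w = 1 := by
    rw [hw, ← dotProduct_mulVec, mulVec_mulVec, ← Units.val_mul, mul_inv_cancel]
    simpa [dotProduct, mul_comm] using hst
  rw [← h, dotProduct, Fin.sum_univ_two]
  ring

/-- `GL₂(ℤ/N)` acts on the left on rows by `v ↦ v g⁻¹`. -/
instance : MulAction (GL (Fin 2) (ZMod N)) (UniRow N) where
  smul g v := ⟨v.1 ᵥ* (g⁻¹ : GL (Fin 2) (ZMod N)).val, isCoprime_vecMul v.2 g⁻¹⟩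
  one_smul v := Subtype.ext (by
    change v.1 ᵥ* ((1 : GL (Fin 2) (ZMod N))⁻¹).val = v.1
    simp)
  mul_smul g h v := Subtype.ext (by
    change v.1 ᵥ* ((g * h)⁻¹).val = (v.1 ᵥ* (h⁻¹).val) ᵥ* (g⁻¹).val
    rw [_root_.mul_inv_rev, Units.val_mul, vecMul_vecMul])

lemma UniRow.coe_smul (g : GL (Fin 2) (ZMod N)) (v : UniRow N) :
    (g • v).1 = v.1 ᵥ* (g⁻¹ : GL (Fin 2) (ZMod N)).val := rfl

/-- The diagonal matrix with entries `1`, `u`. -/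
def diagGL (u : (ZMod N)ˣ) : GL (Fin 2) (ZMod N) :=
  GeneralLinearGroup.mk' !![1, 0; 0, (u : ZMod N)] (by
    rw [det_fin_two_of]; simpa using u.invertible)

lemma coe_diagGL (u : (ZMod N)ˣ) : (diagGL u).val = !![1, 0; 0, (u : ZMod N)] := rfl

/-- Reduction modulo `N`. -/
def redGL : SL(2, ℤ) →* GL (Fin 2) (ZMod N) :=
  SpecialLinearGroup.toGL.comp (SpecialLinearGroup.map (Int.castRingHom (ZMod N)))

end UniRow

section Root

variable {N : ℕ} [NeZero N]

lemma exists_triangular_adapted' (v : UniRow N) :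
    ∃ t : ℕ × ℕ × ℕ, t.1 * t.2.2 = N ∧ Adapted !![(t.1 : ℤ), t.2.1; 0, t.2.2] v.1 := by
  obtain ⟨a, b, d, h⟩ := exists_triangular_adapted (NeZero.pos N) v.1
  exact ⟨(a, b, d), h⟩

/-- The entries `(a, b, d)` of an upper triangular matrix adapted to `v`. -/
def rowTriple (v : UniRow N) : ℕ × ℕ × ℕ := (exists_triangular_adapted' v).choose

/-- An upper triangular matrix adapted to `v`. -/
def rowMat (v : UniRow N) : Matrix (Fin 2) (Fin 2) ℤ :=
  !![((rowTriple v).1 : ℤ), (rowTriple v).2.1; 0, (rowTriple v).2.2]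

lemma rowTriple_mul (v : UniRow N) : (rowTriple v).1 * (rowTriple v).2.2 = N :=
  (exists_triangular_adapted' v).choose_spec.1

lemma adapted_rowMat (v : UniRow N) : Adapted (rowMat v) v.1 :=
  (exists_triangular_adapted' v).choose_spec.2

lemma Adapted.det_ne_zero {A : Matrix (Fin 2) (Fin 2) ℤ} {v : Fin 2 → ZMod N}
    (h : Adapted A v) : A.det ≠ 0 := by
  rw [h.1]; exact_mod_cast NeZero.ne N

lemma Adapted.det_pos {A : Matrix (Fin 2) (Fin 2) ℤ} {v : Fin 2 → ZMod N}
    (h : Adapted A v) : 0 < A.det := by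
  rw [h.1]; exact_mod_cast NeZero.pos N

/-- The conjugate of `j` attached to the row `v`. -/
def jRow (v : UniRow N) (τ : ℍ) : ℂ := jFunction (intGL (rowMat v) • τ)

lemma Adapted.jFunction_eq_jRow {A : Matrix (Fin 2) (Fin 2) ℤ} {v : UniRow N}
    (h : Adapted A v.1) (τ : ℍ) : jFunction (intGL A • τ) = jRow v τ := by
  obtain ⟨C, rfl⟩ := h.exists_eq_mul (NeZero.pos N) v.2 (adapted_rowMat v)
  exact jFunction_intGL_mul C (adapted_rowMat v).det_ne_zero τ

lemma jRow_smul (γ : SL(2, ℤ)) (v : UniRow N) (τ : ℍ) :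
    jRow v (γ • τ) = jRow ((redGL γ : GL (Fin 2) (ZMod N))⁻¹ • v) τ := by
  rw [jRow, ← intGL_mul_smul (adapted_rowMat v).det_ne_zero]
  refine Adapted.jFunction_eq_jRow ?_ τ
  rw [UniRow.coe_smul, inv_inv]
  exact (adapted_rowMat v).mul γ

variable {k : Type} [Field k] [Algebra k ℂ]

/-- The expansion of `jRow v`, in terms of a primitive `N`-th root of unity `ζ`. -/
def rowRoot (ζ : k) (v : UniRow N) : LaurentSeries k :=
  jExp (ζ ^ ((rowTriple v).1 * (rowTriple v).2.1)) ((rowTriple v).1 ^ 2)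

lemma hasExp_triangular {ζ : k} (hζ : algebraMap k ℂ ζ = Complex.exp (2 * Real.pi * Complex.I / N))
    {a b d : ℕ} (had : a * d = N) :
    HasExp N (fun τ ↦ jFunction (intGL !![(a : ℤ), b; 0, d] • τ)) (jExp (ζ ^ (a * b)) (a ^ 2)) := by
  have hpos : 0 < a * d := had ▸ NeZero.pos N
  have hd : (d : ℂ) ≠ 0 := by
    rintro h; rw [Nat.cast_eq_zero] at h; simp [h] at hpos
  have ha : (a : ℂ) ≠ 0 := by
    rintro h; rw [Nat.cast_eq_zero] at h; simp [h] at hpos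
  have hζ0 : ζ ≠ 0 := by
    rintro rfl; rw [map_zero] at hζ; exact Complex.exp_ne_zero _ hζ.symm
  have hdet : 0 < (!![(a : ℤ), b; 0, d]).det := by
    rw [det_fin_two_of]; simpa using (by exact_mod_cast hpos : (0 : ℤ) < a * d)
  refine ⟨_, hasPole_jExp (pow_ne_zero _ hζ0) (pow_pos (Nat.pos_of_mul_pos_right hpos) 2)
    (mdiff_jFunction.comp (mdifferentiable_smul (det_intGL_pos hdet))) fun τ ↦ ?_⟩
  rw [map_pow, hζ, qParam, qParam, ← Complex.exp_nat_mul, ← Complex.exp_nat_mul, ← Complex.exp_add,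
    coe_intGL_triangular_smul hpos, ← had]
  congr 1
  push_cast
  field_simp
  ring

lemma hasExp_jRow {ζ : k} (hζ : algebraMap k ℂ ζ = Complex.exp (2 * Real.pi * Complex.I / N))
    (v : UniRow N) : HasExp N (jRow v) (rowRoot ζ v) :=
  hasExp_triangular hζ (rowTriple_mul v)

lemma mapCoeff_rowRoot {ζ : k}
    (hζ : algebraMap k ℂ ζ = Complex.exp (2 * Real.pi * Complex.I / N))
    (σ : k →+* k) (u : (ZMod N)ˣ) (hσ : σ ζ = ζ ^ (u : ZMod N).val) (v : UniRow N) :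
    mapCoeff σ (rowRoot ζ v) = rowRoot ζ ((diagGL u)⁻¹ • v) := by
  have h := (adapted_rowMat v).twist (u : ZMod N).val
  have hw : ![v.1 0, v.1 1 * ((u : ZMod N).val : ZMod N)] = ((diagGL u)⁻¹ • v).1 := by
    rw [UniRow.coe_smul, inv_inv, coe_diagGL]
    ext i
    fin_cases i <;> simp [vecMul, dotProduct, Fin.sum_univ_two]
  rw [hw] at h
  have h2 := hasExp_triangular hζ (b := (u : ZMod N).val * (rowTriple v).2.1) (rowTriple_mul v)
  simp_rw [h.jFunction_eq_jRow] at h2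
  rw [rowRoot, mapCoeff_jExp, map_pow, hσ, ← HasExp.unique_right (NeZero.pos N) h2
      (hasExp_jRow hζ _),
    ← pow_mul]
  congr 2
  ring

lemma rowRoot_eq_iff {ζ : k}
    (hζ : algebraMap k ℂ ζ = Complex.exp (2 * Real.pi * Complex.I / N)) (v w : UniRow N) :
    rowRoot ζ v = rowRoot ζ w ↔ ∃ u : (ZMod N)ˣ, w.1 = (u : ZMod N) • v.1 := by
  have hprim : IsPrimitiveRoot ζ N := by
    have := Complex.isPrimitiveRoot_exp N (NeZero.ne N)
    rw [← hζ] at this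
    exact this.of_map_of_injective (algebraMap k ℂ).injective
  have hζ0 : ζ ≠ 0 := hprim.ne_zero (NeZero.ne N)
  constructor
  · intro h
    obtain ⟨h1, h2⟩ := jExp_injective (pow_ne_zero _ hζ0) (pow_ne_zero _ hζ0) h
    have ha : (rowTriple v).1 = (rowTriple w).1 := Nat.pow_left_injective two_ne_zero h1
    have hv := rowTriple_mul v
    have hw := rowTriple_mul w
    have ha0 : 0 < (rowTriple v).1 := Nat.pos_of_mul_pos_right (hv ▸ NeZero.pos N)
    have hd : (rowTriple v).2.2 = (rowTriple w).2.2 := by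
      refine Nat.eq_of_mul_eq_mul_left ha0 ?_
      rw [hv, ha, hw]
    have hb : ((rowTriple v).2.2 : ℤ) ∣ (rowTriple v).2.1 - (rowTriple w).2.1 := by
      rw [← ha, ← zpow_natCast, ← zpow_natCast, ← div_eq_one_iff_eq (zpow_ne_zero _ hζ0),
        ← zpow_sub₀ hζ0, hprim.zpow_eq_one_iff_dvd] at h2
      have ha0' : ((rowTriple v).1 : ℤ) ≠ 0 := by exact_mod_cast ha0.ne'
      refine (mul_dvd_mul_iff_left ha0').1 ?_
      have hv' : ((rowTriple v).1 : ℤ) * (rowTriple v).2.2 = N := by exact_mod_cast hv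
      rw [mul_sub, hv']
      exact_mod_cast h2
    obtain ⟨m, hm⟩ := hb
    have hmat : rowMat v = ((ModularGroup.T ^ m : SL(2, ℤ)) :
      Matrix (Fin 2) (Fin 2) ℤ) * rowMat w := by
      rw [ModularGroup.coe_T_zpow, rowMat, rowMat, ← ha, ← hd]
      ext i j
      fin_cases i <;> fin_cases j <;> simp [mul_apply, Fin.sum_univ_two]
      linear_combination hm
    have hAw : Adapted (rowMat v) w.1 := by
      obtain ⟨hdet, x, y, hxy⟩ := adapted_rowMat w
      refine ⟨(adapted_rowMat v).1, x, y - x * m, fun i ↦ ?_⟩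
      rw [← hxy, hmat, ModularGroup.coe_T_zpow]
      simp [mul_apply, Fin.sum_univ_two]
      ring
    exact exists_unit_smul_of_adapted v.2 w.2 (adapted_rowMat v) hAw
  · rintro ⟨u, hu⟩
    have h : Adapted (rowMat v) w.1 := hu ▸ (adapted_rowMat v).smul u
    have hfun : jRow v = jRow w := funext fun τ ↦ h.jFunction_eq_jRow τ
    have hw := hasExp_jRow hζ w
    rw [← hfun] at hw
    exact HasExp.unique_right (NeZero.pos N) (hasExp_jRow hζ v) hw

end Root

end JPaper

namespace JPaper

/-! ### A criterion computing a Galois group from relations between roots -/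

section Galois

variable {K L V G : Type*} [Field K] [Field L] [Algebra K L] [Group G] [MulAction G V]

lemma exists_monoidHom_algEquiv {r : V → L}
    (hr : Function.Surjective (MvPolynomial.aeval (R := K) r))
    (hinv : ∀ (g : G) (P : MvPolynomial V K), MvPolynomial.aeval r P = 0 →
      MvPolynomial.aeval (fun v ↦ r (g • v)) P = 0) :
    ∃ φ : G →* (L ≃ₐ[K] L), ∀ g v, φ g (r v) = r (g • v) := by
  have hext : ∀ α β : L →ₐ[K] L, (∀ v, α (r v) = β (r v)) → α = β := by
    intro α β h
    have h2 : α.comp (MvPolynomial.aeval r) = β.comp (MvPolynomial.aeval r) :=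
      MvPolynomial.algHom_ext fun v ↦ by simp [h]
    ext x
    obtain ⟨P, rfl⟩ := hr x
    exact DFunLike.congr_fun h2 P
  have hex : ∀ g : G, ∃ α : L →ₐ[K] L, ∀ v, α (r v) = r (g • v) := fun g ↦
    ⟨AlgHom.liftOfSurjective (MvPolynomial.aeval r) hr (MvPolynomial.aeval fun v ↦ r (g • v))
      fun P hP ↦ hinv g P hP, fun v ↦ by
        simpa only [MvPolynomial.aeval_X] using AlgHom.liftOfSurjective_apply (MvPolynomial.aeval r)
          hr (MvPolynomial.aeval fun v ↦ r (g • v)) (fun P hP ↦ hinv g P hP) (MvPolynomial.X v)⟩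
  choose α hα using hex
  let ψ : G →* (L →ₐ[K] L) :=
    { toFun := α
      map_one' := hext _ _ fun v ↦ by simp [hα]
      map_mul' := fun g h ↦ hext _ _ fun v ↦ by simp [hα, mul_smul] }
  exact ⟨(AlgEquiv.algHomUnitsEquiv K L).toMonoidHom.comp ψ.toHomUnits, fun g v ↦ hα g v⟩

lemma exists_surjective_monoidHom_algEquiv [FiniteDimensional K L] {r : V → L}
    (hr : Function.Surjective (MvPolynomial.aeval (R := K) r))
    (hinv : ∀ (g : G) (P : MvPolynomial V K), MvPolynomial.aeval r P = 0 →
      MvPolynomial.aeval (fun v ↦ r (g • v)) P = 0)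
    (hfix : ∀ P : MvPolynomial V K,
      (∀ g : G, MvPolynomial.aeval (fun v ↦ r (g • v)) P = MvPolynomial.aeval r P) →
      ∃ c : K, MvPolynomial.aeval r P = algebraMap K L c) :
    ∃ φ : G →* (L ≃ₐ[K] L), Function.Surjective φ ∧ ∀ g v, φ g (r v) = r (g • v) := by
  obtain ⟨φ, hφ⟩ := exists_monoidHom_algEquiv hr hinv
  refine ⟨φ, ?_, hφ⟩
  have hbot : IntermediateField.fixedField φ.range = ⊥ := by
    rw [eq_bot_iff]
    intro x hx
    obtain ⟨P, rfl⟩ := hr x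
    obtain ⟨c, hc⟩ := hfix P fun g ↦ by
      have h := IntermediateField.mem_fixedField_iff _ _ |>.1 hx (φ g) ⟨g, rfl⟩
      rw [← h, ← AlgEquiv.coe_toAlgHom, ← AlgHom.comp_apply, MvPolynomial.comp_aeval]
      simp [hφ]
    exact IntermediateField.mem_bot.2 ⟨c, hc.symm⟩
  rw [← MonoidHom.range_eq_top, ← IntermediateField.fixingSubgroup_fixedField φ.range, hbot,
    IntermediateField.fixingSubgroup_bot]

lemma nonempty_gal_mulEquiv (p : Polynomial K) (hp : (p.map (algebraMap K L)).Splits) (r : V → L)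
    (hroot : p.rootSet L = Set.range r)
    (hinv : ∀ (g : G) (P : MvPolynomial V K), MvPolynomial.aeval r P = 0 →
      MvPolynomial.aeval (fun v ↦ r (g • v)) P = 0)
    (hfix : ∀ P : MvPolynomial V K,
      (∀ g : G, MvPolynomial.aeval (fun v ↦ r (g • v)) P = MvPolynomial.aeval r P) →
      ∃ c : K, MvPolynomial.aeval r P = algebraMap K L c)
    (Z : Subgroup G) [Z.Normal] (hZ : ∀ g, g ∈ Z ↔ ∀ v, r (g • v) = r v) :
    Nonempty (p.Gal ≃* G ⧸ Z) := by
  set E := IntermediateField.adjoin K (p.rootSet L) with hE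
  have hsplit : p.IsSplittingField K E := IntermediateField.adjoin_rootSet_isSplittingField hp
  have hfin : FiniteDimensional K E := Polynomial.IsSplittingField.finiteDimensional E p
  have hmem : ∀ v, r v ∈ E := fun v ↦
    IntermediateField.subset_adjoin _ _ (hroot ▸ Set.mem_range_self v)
  let s : V → E := fun v ↦ ⟨r v, hmem v⟩
  have hval : ∀ (t : V → V) (P : MvPolynomial V K),
      ((MvPolynomial.aeval (fun v ↦ s (t v)) P : E) : L) =
        MvPolynomial.aeval (fun v ↦ r (t v)) P := by
    intro t P
    rw [← IntermediateField.coe_val, ← AlgHom.comp_apply, MvPolynomial.comp_aeval]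
    rfl
  have hsurj : Function.Surjective (MvPolynomial.aeval (R := K) s) := by
    intro x
    have hx : x.1 ∈ (MvPolynomial.aeval (R := K) r).range := by
      rw [← Algebra.adjoin_range_eq_range_aeval, ← hroot,
        ← IntermediateField.adjoin_toSubalgebra_of_isAlgebraic fun x ↦
          isAlgebraic_of_mem_rootSet]
      exact x.2
    obtain ⟨P, hP⟩ := hx
    exact ⟨P, Subtype.ext ((hval id P).trans hP)⟩
  obtain ⟨φ, hφ, hφs⟩ := exists_surjective_monoidHom_algEquiv (G := G) (K := K) (r := s) hsurj
    (fun g P hP ↦ Subtype.ext (by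
      rw [hval (g • ·)]
      exact hinv g P ((hval id P).symm.trans (congr_arg Subtype.val hP))))
    (fun P hP ↦ by
      obtain ⟨c, hc⟩ := hfix P fun g ↦ by
        rw [← hval (g • ·), hP g]
        exact hval id P
      exact ⟨c, Subtype.ext ((hval id P).trans hc)⟩)
  have hker : φ.ker = Z := by
    ext g
    rw [MonoidHom.mem_ker, hZ]
    constructor
    · intro h v
      have := hφs g v
      rw [h] at this
      exact (congr_arg Subtype.val this).symm
    · intro h
      refine AlgEquiv.ext fun x ↦ ?_
      obtain ⟨P, rfl⟩ := hsurj x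
      have h2 : (φ g).toAlgHom.comp (MvPolynomial.aeval (R := K) s) = MvPolynomial.aeval s :=
        MvPolynomial.algHom_ext fun v ↦ by simpa [hφs] using Subtype.ext (h v)
      exact DFunLike.congr_fun h2 P
  have e : p.Gal ≃* (E ≃ₐ[K] E) :=
    AlgEquiv.autCongr (Polynomial.IsSplittingField.algEquiv E p).symm
  exact ⟨e.trans ((QuotientGroup.quotientKerEquivOfSurjective φ hφ).symm.trans
    (QuotientGroup.quotientMulEquivOfEq hker))⟩

end Galois

section ClearDenominators

variable {A K L V G : Type*} [CommRing A] [IsDomain A] [Field K] [Algebra A K]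
  [IsFractionRing A K] [Field L] [Algebra K L] [Group G] [MulAction G V]

lemma exists_C_mul_eq_map (P : MvPolynomial V K) :
    ∃ b : A, b ≠ 0 ∧ ∃ Q : MvPolynomial V A,
      MvPolynomial.C (algebraMap A K b) * P = Q.map (algebraMap A K) := by
  let := MvPolynomial.algebraMvPolynomial (R := A) (S := K) (σ := V)
  obtain ⟨⟨Q, ⟨_, b, hb, rfl⟩⟩, h⟩ :=
    IsLocalization.surj ((nonZeroDivisors A).map (MvPolynomial.C (σ := V))) P
  refine ⟨b, nonZeroDivisors.ne_zero hb, Q, ?_⟩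
  rw [mul_comm, ← MvPolynomial.map_C]
  exact h

lemma nonempty_gal_mulEquiv_of_fractionRing (ι : A →+* L)
    (hι : (algebraMap K L).comp (algebraMap A K) = ι)
    (p : Polynomial K) (hp : (p.map (algebraMap K L)).Splits) (r : V → L)
    (hroot : p.rootSet L = Set.range r)
    (hinv : ∀ (g : G) (P : MvPolynomial V A), P.eval₂ ι r = 0 →
      P.eval₂ ι (fun v ↦ r (g • v)) = 0)
    (hfix : ∀ P : MvPolynomial V A,
      (∀ g : G, P.eval₂ ι (fun v ↦ r (g • v)) = P.eval₂ ι r) → ∃ c : A, P.eval₂ ι r = ι c)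
    (Z : Subgroup G) [Z.Normal] (hZ : ∀ g, g ∈ Z ↔ ∀ v, r (g • v) = r v) :
    Nonempty (p.Gal ≃* G ⧸ Z) := by
  have key : ∀ (b : A) (P : MvPolynomial V K) (Q : MvPolynomial V A) (s : V → L),
      MvPolynomial.C (algebraMap A K b) * P = Q.map (algebraMap A K) →
      ι b * MvPolynomial.aeval s P = Q.eval₂ ι s := by
    intro b P Q s h
    have := congr_arg (MvPolynomial.aeval s) h
    rw [map_mul, MvPolynomial.aeval_C, MvPolynomial.aeval_def, MvPolynomial.aeval_def,
      MvPolynomial.eval₂_map, hι] at this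
    rw [← this, ← hι]
    rfl
  have hb0 : ∀ b : A, b ≠ 0 → ι b ≠ 0 := fun b hb ↦ by
    rw [← hι, RingHom.comp_apply, Ne, map_eq_zero,
      map_eq_zero_iff _ (IsFractionRing.injective A K)]
    exact hb
  refine nonempty_gal_mulEquiv p hp r hroot (fun g P hP ↦ ?_) (fun P hP ↦ ?_) Z hZ
  · obtain ⟨b, hb, Q, hQ⟩ := exists_C_mul_eq_map (A := A) P
    have h := hinv g Q (by rw [← key b P Q _ hQ, hP, mul_zero])
    rw [← key b P Q _ hQ] at h
    exact (mul_eq_zero.1 h).resolve_left (hb0 b hb)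
  · obtain ⟨b, hb, Q, hQ⟩ := exists_C_mul_eq_map (A := A) P
    obtain ⟨c, hc⟩ := hfix Q fun g ↦ by
      rw [← key b P Q _ hQ, ← key b P Q _ hQ, hP]
    refine ⟨algebraMap A K c / algebraMap A K b, ?_⟩
    rw [← key b P Q _ hQ] at hc
    rw [map_div₀, eq_div_iff (by simpa [← hι] using hb0 b hb), mul_comm]
    simpa [← hι] using hc

lemma exists_ringHom_comp_algebraMap_eq {A K L : Type*} [CommRing A] [IsDomain A] [Field K]
    [Algebra A K] [IsFractionRing A K] [Field L] {ι : A →+* L} (hι : Function.Injective ι) :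
    ∃ f : K →+* L, f.comp (algebraMap A K) = ι :=
  ⟨IsFractionRing.lift hι, RingHom.ext fun x ↦ IsFractionRing.lift_algebraMap hι x⟩

lemma nonempty_gal_mulEquiv_of_ringHom {A K L V G H : Type*} [CommRing A] [IsDomain A] [Field K]
    [Algebra A K] [IsFractionRing A K] [Field L] [Group G] [Group H] [MulAction H V]
    (f : K →+* L) (ι : A →+* L) (hι : f.comp (algebraMap A K) = ι)
    (p : Polynomial K) (hne : p.map f ≠ 0) (hp : (p.map f).Splits) (r : V → L)
    (hroot : ∀ x, (p.map f).eval x = 0 ↔ ∃ v, r v = x) (ρ : G →* H)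
    (hinv : ∀ (g : G) (P : MvPolynomial V A), P.eval₂ ι r = 0 →
      P.eval₂ ι (fun v ↦ r (ρ g • v)) = 0)
    (hfix : ∀ P : MvPolynomial V A,
      (∀ g : G, P.eval₂ ι (fun v ↦ r (ρ g • v)) = P.eval₂ ι r) → ∃ c : A, P.eval₂ ι r = ι c)
    (Z : Subgroup G) [Z.Normal] (hZ : ∀ g, g ∈ Z ↔ ∀ v, r (ρ g • v) = r v) :
    Nonempty (p.Gal ≃* G ⧸ Z) := by
  let : Algebra K L := f.toAlgebra
  let : MulAction G V := MulAction.compHom V ρ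
  refine nonempty_gal_mulEquiv_of_fractionRing ι hι p hp r ?_ hinv hfix Z hZ
  ext x
  rw [Polynomial.mem_rootSet', Polynomial.aeval_def, ← Polynomial.eval_map, Set.mem_range,
    ← hroot x]
  exact and_iff_right hne

end ClearDenominators

end JPaper

namespace JPaper

/-! ### Relations between the conjugates of `j` -/

lemma forall_smul_eq_iff_mem_center {N : ℕ} (g : GL (Fin 2) (ZMod N)) :
    (∀ v : UniRow N, ∃ u : (ZMod N)ˣ, (g • v).1 = (u : ZMod N) • v.1) ↔
      g ∈ Subgroup.center (GL (Fin 2) (ZMod N)) := by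
  rw [← inv_mem_iff, GeneralLinearGroup.mem_center_iff_val_mem_range_scalar]
  simp_rw [UniRow.coe_smul]
  set h := g⁻¹
  constructor
  · intro H
    obtain ⟨a, ha⟩ := H ⟨![1, 0], by simp [isCoprime_one_left]⟩
    obtain ⟨b, hb⟩ := H ⟨![0, 1], by simp [isCoprime_one_right]⟩
    obtain ⟨c, hc⟩ := H ⟨![1, 1], by simp [isCoprime_one_right]⟩
    have ha0 := congr_fun ha 0
    have ha1 := congr_fun ha 1
    have hb0 := congr_fun hb 0
    have hb1 := congr_fun hb 1
    have hc0 := congr_fun hc 0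
    have hc1 := congr_fun hc 1
    simp [vecMul, dotProduct, Fin.sum_univ_two] at ha0 ha1 hb0 hb1 hc0 hc1
    refine ⟨h.val 0 0, ?_⟩
    ext i j
    fin_cases i <;> fin_cases j <;> simp
    · exact ha1.symm
    · exact hb0.symm
    · linear_combination hc0 - hc1 - hb0 + ha1
  · rintro ⟨x, hx⟩ v
    have hu : IsUnit x := by
      have := h.isUnit.map (Matrix.detMonoidHom)
      rw [← hx] at this
      simpa using (isUnit_pow_iff two_ne_zero).1 (by simpa using this)
    refine ⟨hu.unit, ?_⟩
    rw [← hx]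
    ext i
    simp [mul_comm]

section Relations

variable {F k : Type} [Field F] [Field k] [Algebra F k] [Algebra k ℂ] {N : ℕ} [NeZero N]

/-- Evaluation of polynomials at `j(τ)`. -/
def evalAt (F k : Type) [Field F] [Field k] [Algebra F k] [Algebra k ℂ] (τ : ℍ) :
    Polynomial F →+* ℂ :=
  Polynomial.eval₂RingHom ((algebraMap k ℂ).comp (algebraMap F k)) (jFunction τ)

lemma hasExp_eval₂ {ζ : k} (hζ : algebraMap k ℂ ζ = Complex.exp (2 * Real.pi * Complex.I / N))
    (s : UniRow N → UniRow N) (P : MvPolynomial (UniRow N) (Polynomial F)) :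
    HasExp N (fun τ ↦ P.eval₂ (evalAt F k τ) fun v ↦ jRow (s v) τ)
      (P.eval₂ (evalJ F k N) fun v ↦ rowRoot ζ (s v)) := by
  induction P using MvPolynomial.induction_on with
  | C a =>
    simp only [MvPolynomial.eval₂_C]
    exact hasExp_evalJ (NeZero.pos N) a
  | add P Q hP hQ =>
    simp only [MvPolynomial.eval₂_add]
    exact hP.add hQ
  | mul_X P v hP =>
    simp only [MvPolynomial.eval₂_mul, MvPolynomial.eval₂_X]
    exact hP.mul (hasExp_jRow hζ (s v))

lemma evalAt_smul (γ : SL(2, ℤ)) (τ : ℍ) : evalAt F k (γ • τ) = evalAt F k τ := by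
  rw [evalAt, evalAt, jFunction_smul]

/-- The data relating a group `G` of automorphisms to the geometric action of `SL₂(ℤ)` and
the arithmetic action of automorphisms of the coefficient field `k` over `F`. -/
structure Compatible {G : Type} [Group G] (F : Type) {k : Type} [Field F] [Field k] [Algebra F k]
    [Algebra k ℂ] {N : ℕ} [NeZero N] (ζ : k) (ρ : G →* GL (Fin 2) (ZMod N)) : Prop where
  exp : algebraMap k ℂ ζ = Complex.exp (2 * Real.pi * Complex.I / N)
  fixed : ∀ a : k, (∀ σ : k ≃ₐ[F] k, σ a = a) → ∃ b : F, algebraMap F k b = a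
  geometric : ∀ γ : SL(2, ℤ), ∃ g, ρ g = redGL γ
  arithmetic : ∀ σ : k ≃ₐ[F] k, ∃ (u : (ZMod N)ˣ) (g : G),
    σ ζ = ζ ^ (u : ZMod N).val ∧ ρ g = diagGL u
  factor : ∀ g, ∃ (γ : SL(2, ℤ)) (u : (ZMod N)ˣ) (σ : k ≃ₐ[F] k),
    σ ζ = ζ ^ (u : ZMod N).val ∧ ρ g = diagGL u * redGL γ

namespace Compatible

variable {G : Type} [Group G] {ζ : k} {ρ : G →* GL (Fin 2) (ZMod N)}

lemma mapCoeff_eval₂ (h : Compatible F ζ ρ) {σ : k ≃ₐ[F] k} {u : (ZMod N)ˣ}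
    (hσ : σ ζ = ζ ^ (u : ZMod N).val) (s : UniRow N → UniRow N)
    (P : MvPolynomial (UniRow N) (Polynomial F)) :
    mapCoeff (σ : k →+* k) (P.eval₂ (evalJ F k N) fun v ↦ rowRoot ζ (s v)) =
      P.eval₂ (evalJ F k N) fun v ↦ rowRoot ζ ((diagGL u)⁻¹ • s v) := by
  rw [MvPolynomial.hom_eval₂]
  congr 1
  · exact RingHom.ext fun Q ↦ mapCoeff_evalJ σ Q
  · exact funext fun v ↦ mapCoeff_rowRoot h.exp (σ : k →+* k) u hσ (s v)

lemma hasExp_smul (h : Compatible F ζ ρ) (γ : SL(2, ℤ)) (s : UniRow N → UniRow N)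
    (P : MvPolynomial (UniRow N) (Polynomial F)) :
    HasExp N (fun τ ↦ P.eval₂ (evalAt F k (γ • τ)) fun v ↦ jRow (s v) (γ • τ))
      (P.eval₂ (evalJ F k N) fun v ↦ rowRoot ζ ((redGL γ : GL (Fin 2) (ZMod N))⁻¹ • s v)) := by
  simp_rw [evalAt_smul, jRow_smul]
  exact hasExp_eval₂ h.exp (fun v ↦ (redGL γ : GL (Fin 2) (ZMod N))⁻¹ • s v) P

lemma eval₂_redGL_eq_zero (h : Compatible F ζ ρ) (γ : SL(2, ℤ)) {s : UniRow N → UniRow N}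
    {P : MvPolynomial (UniRow N) (Polynomial F)}
    (hP : P.eval₂ (evalJ F k N) (fun v ↦ rowRoot ζ (s v)) = 0) :
    P.eval₂ (evalJ F k N) (fun v ↦ rowRoot ζ ((redGL γ : GL (Fin 2) (ZMod N))⁻¹ • s v)) = 0 := by
  have h0 := (hasExp_eval₂ (F := F) h.exp s P)
  have h1 := h.hasExp_smul γ s P
  rw [hP] at h0
  have h2 := (h0.eq_zero_iff (NeZero.pos N)).2 rfl
  refine (h1.eq_zero_iff (NeZero.pos N)).1 ?_
  exact funext fun τ ↦ congr_fun h2 (γ • τ)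

lemma eval₂_eq_zero (h : Compatible F ζ ρ) (g : G) {P : MvPolynomial (UniRow N) (Polynomial F)}
    (hP : P.eval₂ (evalJ F k N) (rowRoot ζ) = 0) :
    P.eval₂ (evalJ F k N) (fun v ↦ rowRoot ζ (ρ g • v)) = 0 := by
  obtain ⟨γ, u, σ, hσ, hg⟩ := h.factor g⁻¹
  have h1 := h.mapCoeff_eval₂ hσ id P
  have h2 : P.eval₂ (evalJ F k N) (fun v ↦ rowRoot ζ ((diagGL u)⁻¹ • v)) = 0 := by
    refine h1.symm.trans ?_
    exact (congr_arg _ hP).trans (map_zero _)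
  have h3 := h.eval₂_redGL_eq_zero γ h2
  have h4 : ρ g = (redGL γ)⁻¹ * (diagGL u)⁻¹ := by
    rw [← _root_.mul_inv_rev, ← hg, map_inv, inv_inv]
  simp_rw [h4, mul_smul]
  exact h3

lemma exists_evalJ_eq_eval₂ (h : Compatible F ζ ρ) (P : MvPolynomial (UniRow N) (Polynomial F))
    (hP : ∀ g, P.eval₂ (evalJ F k N) (fun v ↦ rowRoot ζ (ρ g • v)) =
      P.eval₂ (evalJ F k N) (rowRoot ζ)) :
    ∃ Q : Polynomial F, evalJ F k N Q = P.eval₂ (evalJ F k N) (rowRoot ζ) := by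
  refine exists_evalJ_eq (NeZero.pos N) h.fixed (hasExp_eval₂ h.exp id P) (fun γ τ ↦ ?_)
    fun σ ↦ ?_
  · obtain ⟨g, hg⟩ := h.geometric γ
    have h1 := h.hasExp_smul γ id P
    have h2 := hP g⁻¹
    rw [map_inv, hg] at h2
    simp only [id] at h1
    rw [h2] at h1
    exact congr_fun (h1.unique_left (NeZero.pos N) (hasExp_eval₂ h.exp id P)) τ
  · obtain ⟨u, g, hσ, hg⟩ := h.arithmetic σ
    refine (h.mapCoeff_eval₂ hσ id P).trans ?_
    have h2 := hP g⁻¹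
    rw [map_inv, hg] at h2
    exact h2

end Compatible

end Relations

end JPaper

namespace JPaper

/-! ### The two groups of automorphisms -/

section Automorphisms

variable {N : ℕ}

lemma diagGL_one : diagGL (1 : (ZMod N)ˣ) = 1 :=
  Units.ext (by rw [coe_diagGL]; simp [one_fin_two])

lemma pow_val_one {k : Type} [Field k] {ζ : k} (hζ : IsPrimitiveRoot ζ N) :
    ζ ^ ((1 : (ZMod N)ˣ) : ZMod N).val = ζ := by
  rw [Units.val_one, ZMod.val_one_eq_one_mod]
  conv_lhs => rw [hζ.eq_orderOf, pow_mod_orderOf, pow_one]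

variable [NeZero N]

lemma exists_redGL_eq_toGL (M : SL(2, ZMod N)) :
    ∃ γ : SL(2, ℤ), (redGL γ : GL (Fin 2) (ZMod N)) = SpecialLinearGroup.toGL M := by
  obtain ⟨γ, rfl⟩ := exists_SL2_lift (NeZero.pos N) M
  exact ⟨γ, rfl⟩

lemma exists_eq_diagGL_mul_redGL (g : GL (Fin 2) (ZMod N)) :
    ∃ (u : (ZMod N)ˣ) (γ : SL(2, ℤ)), g = diagGL u * redGL γ := by
  set u := GeneralLinearGroup.det g with hu
  have hdiag : GeneralLinearGroup.det (diagGL u) = u := Units.ext (by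
    rw [GeneralLinearGroup.val_det_apply, coe_diagGL, det_fin_two_of]; simp)
  have hdet : (((diagGL u)⁻¹ * g : GL (Fin 2) (ZMod N)) :
      Matrix (Fin 2) (Fin 2) (ZMod N)).det = 1 := by
    rw [← GeneralLinearGroup.val_det_apply, map_mul, map_inv, hdiag, ← hu]
    simp
  obtain ⟨γ, hγ⟩ := exists_redGL_eq_toGL ⟨_, hdet⟩
  refine ⟨u, γ, ?_⟩
  have : (redGL γ : GL (Fin 2) (ZMod N)) = (diagGL u)⁻¹ * g := hγ.trans (Units.ext rfl)
  rw [this, mul_inv_cancel_left]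

lemma normal_algebraicClosure (F : Type) [Field F] [Algebra F ℂ] :
    Normal F (algebraicClosure F ℂ) :=
  IsAlgClosure.normal F _

lemma exists_fixed {F : Type} [Field F] [Algebra F ℂ] (a : algebraicClosure F ℂ)
    (ha : ∀ σ : algebraicClosure F ℂ ≃ₐ[F] algebraicClosure F ℂ, σ a = a) :
    ∃ b : F, algebraMap F (algebraicClosure F ℂ) b = a := by
  have : CharZero F := (algebraMap F ℂ).charZero
  have : Normal F (algebraicClosure F ℂ) := normal_algebraicClosure F
  have : IsGalois F (algebraicClosure F ℂ) := {}
  exact (InfiniteGalois.mem_range_algebraMap_iff_fixed a).2 ha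

lemma isAlgebraic_exp (F : Type) [Field F] [Algebra F ℂ] :
    IsAlgebraic F (Complex.exp (2 * Real.pi * Complex.I / N)) := by
  have h := (Complex.isPrimitiveRoot_exp N (NeZero.ne N)).isIntegral (NeZero.pos N)
  exact (h.tower_top (A := F)).isAlgebraic

/-- The primitive `N`-th root of unity in the algebraic closure of `F` in `ℂ`. -/
def zetaN (F : Type) [Field F] [Algebra F ℂ] (N : ℕ) [NeZero N] : algebraicClosure F ℂ :=
  ⟨Complex.exp (2 * Real.pi * Complex.I / N), mem_algebraicClosure_iff.2 (isAlgebraic_exp F)⟩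

lemma isPrimitiveRoot_zetaN (F : Type) [Field F] [Algebra F ℂ] : IsPrimitiveRoot (zetaN F N) N :=
  (Complex.isPrimitiveRoot_exp N (NeZero.ne N)).of_map_of_injective
    (f := algebraMap (algebraicClosure F ℂ) ℂ)
    (algebraMap (algebraicClosure F ℂ) ℂ).injective

lemma compatible_rat :
    Compatible ℚ (zetaN ℚ N) (MonoidHom.id (GL (Fin 2) (ZMod N))) where
  exp := rfl
  fixed := exists_fixed
  geometric γ := ⟨redGL γ, rfl⟩
  arithmetic σ := ⟨(isPrimitiveRoot_zetaN ℚ).autToPow ℚ σ, _,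
    ((isPrimitiveRoot_zetaN ℚ).autToPow_spec ℚ σ).symm, rfl⟩
  factor g := by
    obtain ⟨u, γ, rfl⟩ := exists_eq_diagGL_mul_redGL g
    have hζ := isPrimitiveRoot_zetaN (N := N) ℚ
    have hu : IsPrimitiveRoot (zetaN ℚ N ^ (u : ZMod N).val) N :=
      hζ.pow_of_coprime _ (ZMod.val_coe_unit_coprime u)
    have : Normal ℚ (algebraicClosure ℚ ℂ) := normal_algebraicClosure ℚ
    have hconj : IsConjRoot ℚ (zetaN ℚ N ^ (u : ZMod N).val) (zetaN ℚ N) := by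
      rw [IsConjRoot, ← Polynomial.cyclotomic_eq_minpoly_rat hζ (NeZero.pos N),
        ← Polynomial.cyclotomic_eq_minpoly_rat hu (NeZero.pos N)]
    obtain ⟨σ, hσ⟩ := isConjRoot_iff_exists_algEquiv.1 hconj
    exact ⟨γ, u, σ, hσ, rfl⟩

lemma exp_mem_Qcyc : Complex.exp (2 * Real.pi * Complex.I / N) ∈ Qcyc :=
  Subfield.subset_closure
    ⟨N, NeZero.pos N, (Complex.isPrimitiveRoot_exp N (NeZero.ne N)).pow_eq_one⟩

lemma apply_zetaN_Qcyc (σ : algebraicClosure Qcyc ℂ ≃ₐ[Qcyc] algebraicClosure Qcyc ℂ) :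
    σ (zetaN Qcyc N) = zetaN Qcyc N :=
  σ.commutes ⟨_, exp_mem_Qcyc⟩

lemma compatible_Qcyc :
    Compatible Qcyc (zetaN Qcyc N) (SpecialLinearGroup.toGL : SL(2, ZMod N) →* _) where
  exp := rfl
  fixed := exists_fixed
  geometric γ := ⟨SpecialLinearGroup.map (Int.castRingHom (ZMod N)) γ, rfl⟩
  arithmetic σ := ⟨1, 1, by rw [apply_zetaN_Qcyc, pow_val_one (isPrimitiveRoot_zetaN Qcyc)],
    by rw [map_one, diagGL_one]⟩
  factor M := by
    obtain ⟨γ, hγ⟩ := exists_redGL_eq_toGL M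
    exact ⟨γ, 1, AlgEquiv.refl, (pow_val_one (isPrimitiveRoot_zetaN Qcyc)).symm,
      by rw [diagGL_one, one_mul, hγ]⟩

end Automorphisms

end JPaper

namespace JPaper

/-! ### The polynomial with roots the conjugates of `j` -/

section RowPoly

variable {F k : Type} [Field F] [Field k] [Algebra F k] [Algebra k ℂ] {N : ℕ} [NeZero N]

instance : Fintype (UniRow N) := Fintype.ofFinite _

/-- The generic monic polynomial with roots indexed by `UniRow N`. -/
def rowPoly (R : Type) [CommRing R] (N : ℕ) [NeZero N] : Polynomial (MvPolynomial (UniRow N) R) :=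
  ∏ v : UniRow N, (Polynomial.X - Polynomial.C (MvPolynomial.X v))

lemma map_rowPoly {R S : Type} [CommRing R] [CommRing S] (f : R →+* S) (r : UniRow N → S) :
    (rowPoly R N).map (MvPolynomial.eval₂Hom f r) =
      ∏ v, (Polynomial.X - Polynomial.C (r v)) := by
  simp [rowPoly, Polynomial.map_prod]

lemma eval₂_coeff_rowPoly {R S : Type} [CommRing R] [CommRing S] (f : R →+* S)
    (r : UniRow N → S) (i : ℕ) : ((rowPoly R N).coeff i).eval₂ f r =
      (∏ v, (Polynomial.X - Polynomial.C (r v))).coeff i := by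
  rw [← map_rowPoly f r, Polynomial.coeff_map, MvPolynomial.coe_eval₂Hom]

lemma hasExp_coeff_prod {ζ : k}
    (hζ : algebraMap k ℂ ζ = Complex.exp (2 * Real.pi * Complex.I / N)) (i : ℕ) :
    HasExp N (fun τ ↦ (∏ v : UniRow N, (Polynomial.X - Polynomial.C (jRow v τ))).coeff i)
      ((∏ v : UniRow N, (Polynomial.X - Polynomial.C (rowRoot ζ v))).coeff i) := by
  have h := hasExp_eval₂ hζ id ((rowPoly (Polynomial k) N).coeff i)
  simpa only [id, eval₂_coeff_rowPoly] using h

lemma map_evalAt_eq_of_map_evalJ_eq {ζ : k}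
    (hζ : algebraMap k ℂ ζ = Complex.exp (2 * Real.pi * Complex.I / N))
    {W : Polynomial (Polynomial F)} (hW : W.map (evalJ F k N) =
      ∏ v : UniRow N, (Polynomial.X - Polynomial.C (rowRoot ζ v))) (τ : ℍ) :
    W.map (evalAt F k τ) = ∏ v : UniRow N, (Polynomial.X - Polynomial.C (jRow v τ)) := by
  ext i
  have h := hasExp_coeff_prod (N := N) hζ i
  rw [← hW, Polynomial.coeff_map] at h
  rw [Polynomial.coeff_map]
  exact congr_fun ((hasExp_evalJ (NeZero.pos N) _).unique_left (NeZero.pos N) h) τ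

lemma map_evalJ_eq_of_map_evalAt_eq {ζ : k}
    (hζ : algebraMap k ℂ ζ = Complex.exp (2 * Real.pi * Complex.I / N))
    {W : Polynomial (Polynomial F)} (hW : ∀ τ, W.map (evalAt F k τ) =
      ∏ v : UniRow N, (Polynomial.X - Polynomial.C (jRow v τ))) :
    W.map (evalJ F k N) = ∏ v : UniRow N, (Polynomial.X - Polynomial.C (rowRoot ζ v)) := by
  ext i : 1
  have h := hasExp_coeff_prod (N := N) hζ i
  simp_rw [← hW, Polynomial.coeff_map] at h
  rw [Polynomial.coeff_map]
  exact (hasExp_evalJ (NeZero.pos N) _).unique_right (NeZero.pos N) h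

lemma Compatible.exists_map_evalJ_eq {G : Type} [Group G] {ζ : k}
    {ρ : G →* GL (Fin 2) (ZMod N)} (h : Compatible F ζ ρ) :
    ∃ W : Polynomial (Polynomial F), W.map (evalJ F k N) =
      ∏ v : UniRow N, (Polynomial.X - Polynomial.C (rowRoot ζ v)) := by
  rw [← Polynomial.mem_lifts, Polynomial.lifts_iff_coeff_lifts]
  intro i
  obtain ⟨Q, hQ⟩ := h.exists_evalJ_eq_eval₂ ((rowPoly (Polynomial F) N).coeff i) fun g ↦ by
    rw [eval₂_coeff_rowPoly, eval₂_coeff_rowPoly]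
    congr 1
    exact Fintype.prod_equiv (MulAction.toPerm (ρ g)) _ _ fun _ ↦ rfl
  exact ⟨Q, hQ.trans (eval₂_coeff_rowPoly _ _ _)⟩

/-- There is a polynomial over `ℚ[j]` whose roots are the functions `jRow v`. -/
lemma exists_map_aeval_eq (N : ℕ) [NeZero N] :
    ∃ W : Polynomial (Polynomial ℚ), ∀ τ, W.map (Polynomial.eval₂RingHom (Rat.castHom ℂ)
      (jFunction τ)) = ∏ v : UniRow N, (Polynomial.X - Polynomial.C (jRow v τ)) := by
  obtain ⟨W, hW⟩ := (compatible_rat (N := N)).exists_map_evalJ_eq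
  refine ⟨W, fun τ ↦ ?_⟩
  rw [← map_evalAt_eq_of_map_evalJ_eq compatible_rat.exp hW τ, evalAt]
  congr 2

lemma map_map_evalJ_eq [CharZero F] {ζ : k}
    (hζ : algebraMap k ℂ ζ = Complex.exp (2 * Real.pi * Complex.I / N))
    {W : Polynomial (Polynomial ℚ)} (hW : ∀ τ, W.map (Polynomial.eval₂RingHom (Rat.castHom ℂ)
      (jFunction τ)) = ∏ v : UniRow N, (Polynomial.X - Polynomial.C (jRow v τ))) :
    (W.map (Polynomial.mapRingHom (Rat.castHom F))).map (evalJ F k N) =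
      ∏ v : UniRow N, (Polynomial.X - Polynomial.C (rowRoot ζ v)) := by
  refine map_evalJ_eq_of_map_evalAt_eq hζ fun τ ↦ ?_
  rw [← hW, Polynomial.map_map]
  congr 1
  refine Polynomial.ringHom_ext' (Subsingleton.elim _ _) ?_
  simp [evalAt]

end RowPoly

end JPaper

namespace JPaper

/-! ### The correspondence cut out by the modular polynomial -/

section Correspondence

lemma smul_eq_smul_of_coe_eq_smul {g h : GL (Fin 2) ℝ} (hg : 0 < g.det.val) (hh : 0 < h.det.val)
    {c : ℝ} (hc : (g : Matrix (Fin 2) (Fin 2) ℝ) = c • (h : Matrix (Fin 2) (Fin 2) ℝ)) (τ : ℍ) :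
    g • τ = h • τ := by
  have hc0 : (c : ℂ) ≠ 0 := by
    rintro h0
    rw [Complex.ofReal_eq_zero.1 h0, zero_smul] at hc
    rw [GeneralLinearGroup.val_det_apply, hc, det_zero] at hg
    exact lt_irrefl _ hg
  refine UpperHalfPlane.ext ?_
  rw [coe_smul_of_det_pos hg, coe_smul_of_det_pos hh, ← mul_div_mul_left (num h τ) (denom h τ) hc0]
  congr 1 <;> simp [num, denom, hc] <;> ring

variable {A : Matrix (Fin 2) (Fin 2) ℤ}

lemma intGL_adjugate_smul (hA : 0 < A.det) (τ : ℍ) : intGL A.adjugate • intGL A • τ = τ := by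
  have hdet : 0 < A.adjugate.det := by rw [det_adjugate]; simpa using hA
  rw [← mul_smul, ← intGL_mul hdet.ne' hA.ne']
  refine (smul_eq_smul_of_coe_eq_smul (h := 1) (c := (A.det : ℝ)) (det_intGL_pos ?_) (by simp)
    ?_ τ).trans (one_smul _ τ)
  · rw [det_mul]; positivity
  · rw [coe_intGL (by rw [det_mul]; positivity), adjugate_mul]
    ext i j
    fin_cases i <;> fin_cases j <;> simp [Matrix.intCast_apply]

lemma IsPrimitiveIntMatrix.adjugate (hA : IsPrimitiveIntMatrix A) :
    IsPrimitiveIntMatrix A.adjugate := by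
  unfold IsPrimitiveIntMatrix at *
  rw [← hA, adjugate_fin_two]
  simp [Int.gcd_def, Nat.gcd_comm, Nat.gcd_left_comm]

lemma gqSmul_eq_intGL_smul (hA : 0 < A.det) {g : GQ} {c : ℚ}
    (hg : ((g.out : GL (Fin 2) ℚ) : Matrix (Fin 2) (Fin 2) ℚ) = c • A.map (fun x => (x : ℚ)))
    (τ : ℍ) : gqSmul g τ = intGL A • τ := by
  refine smul_eq_smul_of_coe_eq_smul (toGLPosR g.out).2 (det_intGL_pos hA) (c := (c : ℝ)) ?_ τ
  change ((g.out : GL (Fin 2) ℚ) : Matrix (Fin 2) (Fin 2) ℚ).map (algebraMap ℚ ℝ) = _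
  rw [hg, coe_intGL hA.ne']
  ext i j
  simp

lemma exists_eq_smul_one_of_mem_center {h : GL2QPos} (hh : h ∈ Subgroup.center GL2QPos) :
    ∃ c : ℚ, ((h : GL (Fin 2) ℚ) : Matrix (Fin 2) (Fin 2) ℚ) = c • 1 := by
  have key (γ : SL(2, ℤ)) : γ.val.map (Int.cast : ℤ → ℚ) * ((h : GL (Fin 2) ℚ)).val =
      ((h : GL (Fin 2) ℚ)).val * γ.val.map (Int.cast : ℤ → ℚ) :=
    congr_arg (fun x : GL2QPos ↦ (x : GL (Fin 2) ℚ).val)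
      (Subgroup.mem_center_iff.1 hh (sl2ZtoGLQ γ))
  have hT := key ModularGroup.T
  have hS := key ModularGroup.S
  rw [← Matrix.ext_iff] at hT hS
  have h1 := hT 0 0
  have h2 := hT 0 1
  have h3 := hS 0 0
  simp [ModularGroup.T, ModularGroup.S, mul_apply, Fin.sum_univ_two] at h1 h2 h3
  refine ⟨(h : GL (Fin 2) ℚ).val 0 0, ?_⟩
  ext i j
  fin_cases i <;> fin_cases j <;> simp <;> linarith

lemma exists_gq (hA : 0 < A.det) : ∃ (g : GQ) (c : ℚ),
    ((g.out : GL (Fin 2) ℚ) : Matrix (Fin 2) (Fin 2) ℚ) = c • A.map (fun x => (x : ℚ)) := by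
  have hdet : (A.map (fun x => (x : ℚ))).det = A.det := by simp [det_fin_two]
  have hpos : 0 < (A.map (fun x => (x : ℚ))).det := by rw [hdet]; exact_mod_cast hA
  set B : GL2QPos := ⟨GeneralLinearGroup.mkOfDetNeZero _ hpos.ne', hpos⟩
  obtain ⟨h, hh⟩ := QuotientGroup.mk_out_eq_mul (Subgroup.center GL2QPos) B
  obtain ⟨c, hc⟩ := exists_eq_smul_one_of_mem_center h.2
  refine ⟨QuotientGroup.mk B, c, ?_⟩
  rw [hh]
  change _ * ((h : GL2QPos) : GL (Fin 2) ℚ).val = _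
  rw [hc, Matrix.mul_smul, mul_one]
  rfl

variable {N : ℕ} [NeZero N]

lemma exists_jRow_eq_iff (z w : ℂ) :
    (∃ (τ : ℍ) (v : UniRow N), jFunction τ = w ∧ jRow v τ = z) ↔
      ∃ (τ : ℍ) (g : GQ), g ∈ GQdet N ∧ jFunction τ = z ∧ jFunction (gqSmul g τ) = w := by
  have hN : (0 : ℤ) < N := by exact_mod_cast NeZero.pos N
  constructor
  · rintro ⟨τ, v, rfl, rfl⟩
    have had := adapted_rowMat v
    have hdet := had.det_pos
    have hadj : (rowMat v).adjugate.det = N := by rw [det_adjugate]; simpa using had.1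
    obtain ⟨g, c, hg⟩ := exists_gq (A := (rowMat v).adjugate) (by rw [hadj]; exact hN)
    refine ⟨intGL (rowMat v) • τ, g, ⟨_, (had.isPrimitive v.2).adjugate, hadj, c, hg⟩, rfl, ?_⟩
    rw [gqSmul_eq_intGL_smul (by rw [hadj]; exact hN) hg, intGL_adjugate_smul hdet]
  · rintro ⟨τ, g, ⟨A, hA, hd, c, hc⟩, rfl, rfl⟩
    have hpos : 0 < A.det := by rw [hd]; exact hN
    have hadj : A.adjugate.det = N := by rw [det_adjugate]; simpa using hd
    obtain ⟨v, hv, hAv⟩ := hA.adjugate.exists_adapted (NeZero.pos N) hadj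
    refine ⟨gqSmul g τ, ⟨v, hv⟩, rfl, ?_⟩
    rw [← Adapted.jFunction_eq_jRow (v := ⟨v, hv⟩) hAv, gqSmul_eq_intGL_smul hpos hc,
      intGL_adjugate_smul hpos]

end Correspondence

end JPaper

namespace JPaper

/-! ### The modular polynomial -/

section ModularPoly

/-- A polynomial in two variables (the root and the parameter) from an iterated polynomial. -/
def biPoly (W : Polynomial (Polynomial ℚ)) : MvPolynomial (Fin 2) ℚ :=
  W.eval₂ (Polynomial.eval₂RingHom MvPolynomial.C (MvPolynomial.X 1)) (MvPolynomial.X 0)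

lemma eval₂Hom_biPoly {S : Type} [CommRing S] (f : ℚ →+* S) (x y : S)
    (W : Polynomial (Polynomial ℚ)) :
    MvPolynomial.eval₂Hom f ![x, y] (biPoly W) =
      W.eval₂ (Polynomial.eval₂RingHom f y) x := by
  rw [biPoly, Polynomial.hom_eval₂]
  congr 1
  · refine Polynomial.ringHom_ext' (Subsingleton.elim _ _) ?_
    simp
  · simp

/-- Polynomials over `ℚ` with comparable complex zero loci divide each other up to powers. -/
lemma exists_dvd_pow_of_zeros {P Q : MvPolynomial (Fin 2) ℚ}
    (h : ∀ z w : ℂ, MvPolynomial.aeval ![z, w] P = 0 → MvPolynomial.aeval ![z, w] Q = 0) :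
    ∃ n : ℕ, P ∣ Q ^ n := by
  have hQ : Q ∈ (Ideal.span {P}).radical := by
    rw [← MvPolynomial.vanishingIdeal_zeroLocus_eq_radical (K := ℂ), MvPolynomial.zeroLocus_span,
      MvPolynomial.mem_vanishingIdeal_iff]
    intro x hx
    have hx' : x = ![x 0, x 1] := by ext i; fin_cases i <;> rfl
    rw [hx'] at hx ⊢
    exact h _ _ (hx P rfl)
  obtain ⟨n, hn⟩ := hQ
  exact ⟨n, Ideal.mem_span_singleton.1 hn⟩

lemma map_modularPolyOneVar {F : Type} [Field F] {N : ℕ} {M : Type} [Field M] (f : RatFunc F →+* M)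
    (φ : ℚ →+* Polynomial M) : (modularPolyOneVar F N).map f =
      MvPolynomial.eval₂Hom φ ![Polynomial.X, Polynomial.C (f RatFunc.X)]
        ((modularPoly N).map (algebraMap ℤ ℚ)) := by
  rw [modularPolyOneVar, ← Polynomial.coe_mapRingHom, MvPolynomial.coe_eval₂Hom,
    MvPolynomial.eval₂_map, MvPolynomial.aeval_def, MvPolynomial.hom_eval₂]
  congr 1
  · exact Subsingleton.elim _ _
  · ext i : 1
    fin_cases i <;> simp

variable {N : ℕ} [NeZero N] {W : Polynomial (Polynomial ℚ)}

lemma aeval_biPoly_eq_zero_iff (hW : ∀ τ, W.map (Polynomial.eval₂RingHom (Rat.castHom ℂ)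
    (jFunction τ)) = ∏ v : UniRow N, (Polynomial.X - Polynomial.C (jRow v τ))) (z w : ℂ) :
    MvPolynomial.aeval ![z, w] (biPoly W) = 0 ↔
      ∃ (τ : ℍ) (g : GQ), g ∈ GQdet N ∧ jFunction τ = z ∧ jFunction (gqSmul g τ) = w := by
  have key (τ : ℍ) : MvPolynomial.aeval ![z, jFunction τ] (biPoly W) =
      ∏ v : UniRow N, (z - jRow v τ) := by
    have h := eval₂Hom_biPoly (algebraMap ℚ ℂ) z (jFunction τ) W
    rw [Subsingleton.elim (algebraMap ℚ ℂ) (Rat.castHom ℂ), ← Polynomial.eval_map, hW,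
      Polynomial.eval_prod] at h
    rw [MvPolynomial.aeval_def, Subsingleton.elim (algebraMap ℚ ℂ) (Rat.castHom ℂ)]
    simpa using h
  rw [← exists_jRow_eq_iff]
  constructor
  · obtain ⟨τ, rfl⟩ := jFunction_surjective w
    rw [key, Finset.prod_eq_zero_iff]
    rintro ⟨v, -, hv⟩
    exact ⟨τ, v, rfl, (sub_eq_zero.1 hv).symm⟩
  · rintro ⟨τ, v, rfl, rfl⟩
    rw [key]
    exact Finset.prod_eq_zero (Finset.mem_univ v) (sub_self _)

lemma biPoly_ne_zero (hW : ∀ τ, W.map (Polynomial.eval₂RingHom (Rat.castHom ℂ)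
    (jFunction τ)) = ∏ v : UniRow N, (Polynomial.X - Polynomial.C (jRow v τ))) :
    biPoly W ≠ 0 := by
  intro h
  have h1 := eval₂Hom_biPoly (Polynomial.C.comp (Rat.castHom ℂ)) Polynomial.X
    (Polynomial.C (jFunction I)) W
  have h2 : Polynomial.eval₂RingHom (Polynomial.C.comp (Rat.castHom ℂ))
      (Polynomial.C (jFunction I)) =
      Polynomial.C.comp (Polynomial.eval₂RingHom (Rat.castHom ℂ) (jFunction I)) :=
    Polynomial.ringHom_ext' (Subsingleton.elim _ _) (by simp)
  rw [h, map_zero, h2] at h1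
  have h3 := h1.trans (hW I)
  rw [eq_comm, Finset.prod_eq_zero_iff] at h3
  obtain ⟨v, -, hv⟩ := h3
  exact Polynomial.X_sub_C_ne_zero _ hv

lemma aeval_modularPoly_eq_zero_iff (z w : ℂ) :
    MvPolynomial.aeval ![z, w] (modularPoly N) = 0 ↔
      ∃ (τ : ℍ) (g : GQ), g ∈ GQdet N ∧ jFunction τ = z ∧ jFunction (gqSmul g τ) = w := by
  have hex : ∃ P : MvPolynomial (Fin 2) ℤ, P ≠ 0 ∧ ∀ z w : ℂ,
      (MvPolynomial.aeval ![z, w]) P = 0 ↔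
        ∃ (τ : ℍ) (g : GQ), g ∈ GQdet N ∧ jFunction τ = z ∧ jFunction (gqSmul g τ) = w := by
    obtain ⟨W, hW⟩ := exists_map_aeval_eq N
    obtain ⟨b, hb, P, hP⟩ := exists_C_mul_eq_map (A := ℤ) (biPoly W)
    have hb' : (algebraMap ℤ ℚ b) ≠ 0 := by simpa using hb
    refine ⟨P, ?_, fun z w ↦ ?_⟩
    · rintro rfl
      rw [map_zero, mul_eq_zero, map_eq_zero_iff _ (MvPolynomial.C_injective _ _)] at hP
      exact hP.elim hb' (biPoly_ne_zero hW)
    · rw [← aeval_biPoly_eq_zero_iff hW]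
      have h := congr_arg (MvPolynomial.aeval ![z, w]) hP
      rw [MvPolynomial.aeval_map_algebraMap, map_mul, MvPolynomial.aeval_C] at h
      rw [← h, mul_eq_zero, or_iff_right]
      rwa [map_eq_zero]
  rw [modularPoly, dif_pos hex]
  exact hex.choose_spec.2 z w

lemma eval₂Hom_biPoly_jExp {k : Type} [Field k] [Algebra k ℂ] {ζ : k}
    (hζ : algebraMap k ℂ ζ = Complex.exp (2 * Real.pi * Complex.I / N))
    (hW : ∀ τ, W.map (Polynomial.eval₂RingHom (Rat.castHom ℂ)
      (jFunction τ)) = ∏ v : UniRow N, (Polynomial.X - Polynomial.C (jRow v τ)))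
    (f : ℚ →+* Polynomial (LaurentSeries k)) :
    MvPolynomial.eval₂Hom f ![Polynomial.X, Polynomial.C (jExp 1 N)] (biPoly W) =
      ∏ v : UniRow N, (Polynomial.X - Polynomial.C (rowRoot ζ v)) := by
  have : CharZero k := (algebraMap k ℂ).charZero
  rw [eval₂Hom_biPoly, ← map_map_evalJ_eq (F := k) hζ hW, Polynomial.map_map, Polynomial.map]
  congr 1
  exact Polynomial.ringHom_ext' (Subsingleton.elim _ _) (by simp [evalJ])

/-- The image of `Φ_N(X, j)` over the Laurent series splits with roots the `rowRoot ζ v`. -/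
lemma splits_and_eval_eq_zero_iff {F k : Type} [Field F] [CharZero F] [Field k]
    [Algebra k ℂ] {ζ : k}
    (hζ : algebraMap k ℂ ζ = Complex.exp (2 * Real.pi * Complex.I / N))
    (f : RatFunc F →+* LaurentSeries k) (hf : f RatFunc.X = jExp 1 N) :
    (modularPolyOneVar F N).map f ≠ 0 ∧ ((modularPolyOneVar F N).map f).Splits ∧
      ∀ x, ((modularPolyOneVar F N).map f).eval x = 0 ↔ ∃ v : UniRow N, rowRoot ζ v = x := by
  obtain ⟨W, hW⟩ := exists_map_aeval_eq N
  let φ : ℚ →+* Polynomial (LaurentSeries k) :=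
    Polynomial.C.comp (f.comp ((algebraMap F (RatFunc F)).comp (Rat.castHom F)))
  have hzero (z w : ℂ) : MvPolynomial.aeval ![z, w] (biPoly W) = 0 ↔
      MvPolynomial.aeval ![z, w] ((modularPoly N).map (algebraMap ℤ ℚ)) = 0 := by
    rw [aeval_biPoly_eq_zero_iff hW, MvPolynomial.aeval_map_algebraMap,
      aeval_modularPoly_eq_zero_iff]
  obtain ⟨a, ha⟩ := exists_dvd_pow_of_zeros fun z w ↦ (hzero z w).1
  obtain ⟨b, hb⟩ := exists_dvd_pow_of_zeros fun z w ↦ (hzero z w).2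
  replace ha := map_dvd (MvPolynomial.eval₂Hom φ ![Polynomial.X, Polynomial.C (f RatFunc.X)]) ha
  replace hb := map_dvd (MvPolynomial.eval₂Hom φ ![Polynomial.X, Polynomial.C (f RatFunc.X)]) hb
  rw [map_pow, ← map_modularPolyOneVar, hf, eval₂Hom_biPoly_jExp hζ hW] at ha hb
  set R := ∏ v : UniRow N, (Polynomial.X - Polynomial.C (rowRoot ζ v)) with hR
  have hR0 : R ≠ 0 := Finset.prod_ne_zero_iff.2 fun v _ ↦ Polynomial.X_sub_C_ne_zero _
  have hRs : R.Splits := Polynomial.Splits.prod fun v _ ↦ Polynomial.Splits.X_sub_C _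
  have hReval (x) : R.eval x = 0 ↔ ∃ v : UniRow N, rowRoot ζ v = x := by
    simp only [hR, Polynomial.eval_prod, Finset.prod_eq_zero_iff, Polynomial.eval_sub,
      Polynomial.eval_X, Polynomial.eval_C, sub_eq_zero, Finset.mem_univ, true_and, @eq_comm _ x]
  refine ⟨ne_zero_of_dvd_ne_zero (pow_ne_zero b hR0) hb,
    (hRs.pow b).of_dvd (pow_ne_zero b hR0) hb, fun x ↦ ?_⟩
  rw [← hReval]
  constructor <;> intro hx
  · have := Polynomial.eval_eq_zero_of_dvd_of_eval_eq_zero hb hx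
    rw [Polynomial.eval_pow] at this
    exact eq_zero_of_pow_eq_zero this
  · have := Polynomial.eval_eq_zero_of_dvd_of_eval_eq_zero ha hx
    rw [Polynomial.eval_pow] at this
    exact eq_zero_of_pow_eq_zero this

end ModularPoly

end JPaper

namespace JPaper

section Galois

variable {F k : Type} [Field F] [CharZero F] [Field k] [Algebra F k] [Algebra k ℂ] {ζ : k}
  {N : ℕ} [NeZero N]

lemma Compatible.nonempty_gal_mulEquiv {G : Type} [Group G] {ρ : G →* GL (Fin 2) (ZMod N)}
    (h : Compatible F ζ ρ) (Z : Subgroup G) [Z.Normal]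
    (hZ : ∀ g, g ∈ Z ↔ ρ g ∈ Subgroup.center (GL (Fin 2) (ZMod N))) :
    Nonempty ((modularPolyOneVar F N).Gal ≃* G ⧸ Z) := by
  have hinj : Function.Injective (evalJ F k N) := evalJ_injective (NeZero.pos N)
  obtain ⟨f, hf⟩ : ∃ f : RatFunc F →+* LaurentSeries k,
      f.comp (algebraMap (Polynomial F) (RatFunc F)) = evalJ F k N :=
    exists_ringHom_comp_algebraMap_eq hinj
  have hfX : f RatFunc.X = jExp 1 N := by
    rw [← RatFunc.algebraMap_X]
    exact (RingHom.congr_fun hf _).trans (by simp [evalJ])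
  obtain ⟨hne, hsplit, hroot⟩ := splits_and_eval_eq_zero_iff h.exp f hfX
  refine nonempty_gal_mulEquiv_of_ringHom f (evalJ F k N) hf _ hne hsplit (rowRoot ζ) hroot ρ
    (fun g P ↦ h.eval₂_eq_zero g) (fun P hP ↦ ?_) Z fun g ↦ ?_
  · obtain ⟨Q, hQ⟩ := h.exists_evalJ_eq_eval₂ P hP
    exact ⟨Q, hQ.symm⟩
  · rw [hZ, ← forall_smul_eq_iff_mem_center]
    refine forall_congr' fun v ↦ ?_
    rw [eq_comm, rowRoot_eq_iff h.exp]

end Galois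

end JPaper

/-- for every `N ≥ 1` the extension `ℚ(j, {j∘g}_{g ∈ G_N}) / ℚ(j)` — i.e.
the splitting field of the modular polynomial `Φ_N(X, j)` over the rational function field
`ℚ(j)` — is Galois with Galois group isomorphic to `PGL₂(ℤ/Nℤ)`, and over
`ℚ^cyc(j)` the corresponding Galois group is isomorphic to `PSL₂(ℤ/Nℤ)`. -/
theorem galois_group_of_modular_cover (N : ℕ) (hN : 1 ≤ N) :
    Nonempty ((JPaper.modularPolyOneVar ℚ N).Gal ≃* JPaper.PGL2ZmodN N) ∧
    Nonempty ((JPaper.modularPolyOneVar ↥JPaper.Qcyc N).Gal ≃* JPaper.PSL2ZmodN N) := by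
  have : NeZero N := ⟨by omega⟩
  exact ⟨JPaper.compatible_rat.nonempty_gal_mulEquiv _ fun _ ↦ Iff.rfl,
    JPaper.compatible_Qcyc.nonempty_gal_mulEquiv _ fun g ↦
      (SpecialLinearGroup.toGL_mem_center_iff g).symm⟩
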